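/- Every 3-connected nonbipartite graph of minimum degree at least 4 and order at least 6 contains 4 cycles of consecutive lengths. -/

import Mathlib

open SimpleGraph

/-- `G` is `k`-connected: more than `k` vertices, and deleting any set of fewer than
`k` vertices leaves a connected graph. -/
def KConnected {V : Type*} (G : SimpleGraph V) (k : ℕ) : Prop :=
  k < Nat.card V ∧ ∀ S : Set V, S.Finite → S.ncard < k → (G.induce Sᶜ).Connected

/-- `G + xy`: the graph `G` with the edge `xy` added (equal to `G` if already present). -/
def AddEdge {V : Type*} (G : SimpleGraph V) (x y : V) : SimpleGraph V :=
  G ⊔ SimpleGraph.fromEdgeSet {s(x, y)}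

/-- `G` has a cycle of length `n`. -/
def HasCycleLength {V : Type*} (G : SimpleGraph V) (n : ℕ) : Prop :=
  ∃ (v : V) (c : G.Walk v v), c.IsCycle ∧ c.length = n

/-- `G` contains `k` cycles of consecutive lengths. -/
def HasConsecCycles {V : Type*} (G : SimpleGraph V) (k : ℕ) : Prop :=
  ∃ m : ℕ, ∀ i < k, HasCycleLength G (m + i)

/-!
The engine is a statement about two sets of terminals in a nearly two-connected set of vertices:
if all degrees are at least three, an edge to a terminal set counting as well, then two paths
between the terminals have lengths differing by two, or by one, and the second alternative comes
with an edge whose ends have low degree. It is proved by induction on the number of vertices.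

If `G` contains a triangle, apply it in a component of the complement: two paths whose lengths
differ by two and whose ends see different vertices of the triangle close up along one or two of
its edges, which gives four consecutive lengths.

If `G` is triangle-free, let `H` be a largest connected set of vertices whose complement does not
induce a bipartite graph. By maximality the complement is an induced odd cycle `c`, of length
`2s + 1` say, all of whose vertices have two neighbours in `H`. A path in `H` between a neighbour
of `c i` and a neighbour of the antipodal vertex `c (i + s)` closes up along either of two arcs, of
lengths `s` and `s + 1`, so again two such paths whose lengths differ by two suffice. Otherwise an
end block `D` of `H` contains an edge `pq` whose ends have low degree, hence neighbours on `c`. If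
`H` stays connected without `p` and `q`, the arcs of `c` between these neighbours close up with
paths through the rest of `H`. If not, `{p, q}` cuts off a part of `D`, and the same argument
inside that part ends in a contradiction.
-/

/-! ### Paths inside a set of vertices -/

section

variable {V : Type*} {G : SimpleGraph V} {S T K R : Set V} {t u v w x : V} {m n : ℕ}

/-- `PathIn G S u v n`: there is a path of length `n` from `u` to `v` inside `S`. Removing the
visited vertex from the ambient set expresses that vertices are not repeated. -/
inductive PathIn (G : SimpleGraph V) : Set V → V → V → ℕ → Prop
  | nil {S : Set V} {u : V} (hu : u ∈ S) : PathIn G S u u 0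
  | cons {S : Set V} {u v w : V} {n : ℕ} (hu : u ∈ S) (h : G.Adj u v)
      (p : PathIn G (S \ {u}) v w n) : PathIn G S u w (n + 1)

namespace PathIn

theorem mono (p : PathIn G S u v n) (h : S ⊆ T) : PathIn G T u v n := by
  induction p generalizing T with
  | nil hu => exact .nil (h hu)
  | cons hu ha _ ih => exact .cons (h hu) ha (ih (Set.sdiff_subset_sdiff_left h))

theorem left_mem (p : PathIn G S u v n) : u ∈ S := by
  cases p <;> assumption

theorem right_mem (p : PathIn G S u v n) : v ∈ S := by
  induction p with
  | nil hu => exact hu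
  | cons _ _ _ ih => exact ih.1

theorem append {v' : V} (p : PathIn G S u v m) (q : PathIn G T v' w n) (h : G.Adj v v')
    (hd : Disjoint S T) (hS : S ⊆ R) (hT : T ⊆ R) : PathIn G R u w (m + n + 1) := by
  induction p generalizing R with
  | @nil S u hu =>
    rw [zero_add]
    exact .cons (hS hu) h (q.mono (Set.subset_sdiff_singleton hT (Set.disjoint_left.1 hd hu)))
  | @cons S u x y k hu ha _ ih =>
    rw [add_right_comm k 1 n]
    exact .cons (hS hu) ha (ih h (hd.mono_left Set.sdiff_subset) (Set.sdiff_subset_sdiff_left hS)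
      (Set.subset_sdiff_singleton hT (Set.disjoint_left.1 hd hu)))

theorem symm (p : PathIn G S u v n) : PathIn G S v u n := by
  induction p with
  | nil hu => exact .nil hu
  | cons hu ha _ ih =>
    exact ih.append (.nil (Set.mem_singleton _)) ha.symm Set.disjoint_sdiff_left Set.sdiff_subset
      (Set.singleton_subset_iff.2 hu)

theorem exists_isPath (p : PathIn G S u v n) : ∃ q : G.Walk u v, q.IsPath ∧ q.length = n := by
  suffices ∃ q : G.Walk u v, q.IsPath ∧ q.length = n ∧ ∀ x ∈ q.support, x ∈ S from
    let ⟨q, hq, hn, _⟩ := this; ⟨q, hq, hn⟩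
  induction p with
  | nil hu => exact ⟨.nil, .nil, rfl, by simpa using hu⟩
  | @cons S u _ _ _ hu ha _ ih =>
    obtain ⟨q, hq, hn, hS⟩ := ih
    refine ⟨.cons ha q, (Walk.cons_isPath_iff ha q).2 ⟨hq, fun h => (hS u h).2 rfl⟩,
      by rw [Walk.length_cons, hn], fun y hy => ?_⟩
    rcases List.mem_cons.1 ((Walk.support_cons ha q) ▸ hy) with rfl | hy
    exacts [hu, (hS y hy).1]

theorem avoids_or_exists_last (p : PathIn G S u v n) (R : Set V) :
    PathIn G (S \ R) u v n ∨ ∃ r ∈ R ∩ S, ∃ m, PathIn G (insert r (S \ R)) r v m := by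
  induction p with
  | @nil S u hu =>
    by_cases h : u ∈ R
    · exact .inr ⟨u, ⟨h, hu⟩, 0, .nil (.inl rfl)⟩
    · exact .inl (.nil ⟨hu, h⟩)
  | @cons S u x w n hu ha _ ih =>
    rcases ih with ih | ⟨r, hr, m, ih⟩
    · by_cases h : u ∈ R
      · exact .inr ⟨u, ⟨h, hu⟩, n + 1,
          .cons (.inl rfl) ha (ih.mono fun y hy => ⟨.inr ⟨hy.1.1, hy.2⟩, hy.1.2⟩)⟩
      · exact .inl (.cons ⟨hu, h⟩ ha (ih.mono fun y hy => ⟨⟨hy.1.1, hy.2⟩, hy.1.2⟩))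
    · exact .inr ⟨r, ⟨hr.1, hr.2.1⟩, m, ih.mono
        (Set.insert_subset_insert (Set.sdiff_subset_sdiff_left Set.sdiff_subset))⟩

theorem exists_last (p : PathIn G S u v n) (hu : u ∈ R) :
    ∃ r ∈ R ∩ S, ∃ m, PathIn G (insert r (S \ R)) r v m :=
  (p.avoids_or_exists_last R).resolve_left fun h => h.left_mem.2 hu

theorem exists_of_adj (p : PathIn G S u v n) (hw : w ∈ S) (h : G.Adj w u) :
    ∃ m, PathIn G S w v m := by
  rcases p.avoids_or_exists_last {w} with q | ⟨r, ⟨rfl, _⟩, m, q⟩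
  · exact ⟨n + 1, .cons hw h q⟩
  · exact ⟨m, q.mono (Set.insert_subset hw Set.sdiff_subset)⟩

theorem hasCycleLength {u' v' : V} (p : PathIn G S u v m) (q : PathIn G T u' v' n)
    (hd : Disjoint S T) (hu : G.Adj u u') (hv : G.Adj v v') (hmn : 1 ≤ m + n) :
    HasCycleLength G (m + n + 2) := by
  obtain ⟨r, hr, hl⟩ := (p.append q.symm hv hd Set.subset_union_left
    Set.subset_union_right).exists_isPath
  refine ⟨u', .cons hu.symm r, (Walk.cons_isCycle_iff r hu.symm).2 ⟨hr, fun h => ?_⟩,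
    by rw [Walk.length_cons, hl]⟩
  have := hr.length_eq_one_of_mem_edges (Sym2.eq_swap ▸ h)
  omega

end PathIn

/-- `T` is closed under passing to neighbours that lie in `S`. -/
def ClosedIn (G : SimpleGraph V) (T S : Set V) : Prop :=
  ∀ u ∈ T, ∀ v ∈ S, G.Adj u v → v ∈ T

/-- The set `S` induces a connected subgraph; the empty set is allowed. -/
def ConnectedOn (G : SimpleGraph V) (S : Set V) : Prop :=
  (G.induce S).Preconnected

/-- The component of `v` in the subgraph induced by `S`, as a set of vertices. -/
def componentIn (G : SimpleGraph V) (S : Set V) (v : V) : Set V :=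
  {w | ∃ n, PathIn G S v w n}

theorem componentIn_subset : componentIn G S v ⊆ S := fun _ ⟨_, h⟩ => h.right_mem

theorem mem_componentIn_self (h : v ∈ S) : v ∈ componentIn G S v := ⟨0, .nil h⟩

theorem componentIn_closedIn : ClosedIn G (componentIn G S v) S := by
  rintro w ⟨n, h⟩ x hx ha
  obtain ⟨m, q⟩ := h.symm.exists_of_adj hx ha.symm
  exact ⟨m, q.symm⟩

namespace ClosedIn

theorem mono (h : ClosedIn G T S) (hR : R ⊆ S) : ClosedIn G T R :=
  fun u hu v hv ha => h u hu v (hR hv) ha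

theorem mem_of_pathIn (hT : ClosedIn G T S) (p : PathIn G S u v n) (hu : u ∈ T) : v ∈ T := by
  induction p with
  | nil _ => exact hu
  | cons _ ha p ih => exact ih (hT.mono Set.sdiff_subset) (hT _ hu _ p.left_mem.1 ha)

theorem componentIn_subset (hT : ClosedIn G T S) (hu : u ∈ T) : componentIn G S u ⊆ T :=
  fun _ ⟨_, p⟩ => hT.mem_of_pathIn p hu

theorem sdiff (h : ClosedIn G T S) : ClosedIn G (S \ T) S :=
  fun u hu v hv ha => ⟨hv, fun hvT => hu.2 (h v hvT u hu.1 ha.symm)⟩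

theorem mem_of_adj (h : ClosedIn G K (S \ R)) (hu : u ∈ K) (hx : x ∈ S \ K) (ha : G.Adj u x) :
    x ∈ R := by
  by_contra hxR
  exact hx.2 (h u hu x ⟨hx.1, hxR⟩ ha)

end ClosedIn

namespace ConnectedOn

theorem eq_of_closedIn (h : ConnectedOn G S) (hT : T ⊆ S) (hne : T.Nonempty)
    (hc : ClosedIn G T S) : T = S := by
  obtain ⟨x, hx⟩ := hne
  refine hT.antisymm fun y hy => ?_
  suffices ∀ {a b : S}, (G.induce S).Walk a b → a.1 ∈ T → b.1 ∈ T from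
    let ⟨p⟩ := h ⟨x, hT hx⟩ ⟨y, hy⟩; this p hx
  intro a b p ha
  induction p with
  | nil => exact ha
  | cons hab _ ih => exact ih (hc _ ha _ (Subtype.prop _) hab)

theorem of_closedIn (h : ∀ T ⊆ S, T.Nonempty → ClosedIn G T S → T = S) : ConnectedOn G S := by
  intro a b
  let T : Set V := {v | ∃ hv : v ∈ S, (G.induce S).Reachable a ⟨v, hv⟩}
  have hc : ClosedIn G T S := by
    rintro u ⟨hu, hau⟩ v hv huv
    exact ⟨hv, hau.trans (Adj.reachable (G := G.induce S) huv)⟩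
  have hT : T = S := h T (fun _ hv => hv.1) ⟨a, a.2, .rfl⟩ hc
  obtain ⟨_, hb⟩ : b.1 ∈ T := hT.superset b.2
  exact hb

theorem of_forall_mem (h : ∀ T ⊆ S, T.Nonempty → ClosedIn G T S → v ∈ T) : ConnectedOn G S := by
  refine of_closedIn fun T hT hne hc => hT.antisymm (Set.sdiff_eq_empty.1 ?_)
  by_contra hrest
  exact (h _ Set.sdiff_subset (Set.nonempty_iff_ne_empty.2 hrest) hc.sdiff).2 (h T hT hne hc)

theorem disjoint_of_closedIn (h : ConnectedOn G R) (hRS : R ⊆ S) (hc : ClosedIn G T S)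
    (hv : v ∈ R \ T) : Disjoint R T := by
  rw [Set.disjoint_iff_inter_eq_empty, ← Set.not_nonempty_iff_eq_empty]
  intro hne
  have hRT := h.eq_of_closedIn Set.inter_subset_left hne
    fun u hu w hw ha => ⟨hw, hc u hu.2 w (hRS hw) ha⟩
  exact hv.2 (hRT.superset hv.1).2

theorem exists_pathIn (h : ConnectedOn G S) (hu : u ∈ S) (hv : v ∈ S) :
    ∃ n, PathIn G S u v n := by
  have := h.eq_of_closedIn componentIn_subset ⟨u, mem_componentIn_self hu⟩ componentIn_closedIn
  exact this.superset hv

theorem of_exists_pathIn (h : ∀ u ∈ S, ∃ n, PathIn G S v u n) : ConnectedOn G S := by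
  refine of_closedIn fun T hT ⟨x, hx⟩ hc => hT.antisymm fun y hy => ?_
  obtain ⟨_, p⟩ := h x (hT hx)
  obtain ⟨_, q⟩ := h y hy
  exact hc.mem_of_pathIn q (hc.mem_of_pathIn p.symm hx)

theorem singleton : ConnectedOn G {v} :=
  of_exists_pathIn (v := v) fun _ hu => ⟨0, hu ▸ .nil rfl⟩

theorem union {Y : Set V} (h : ConnectedOn G S) (hY : ∀ y ∈ Y, ∃ x ∈ S, G.Adj y x) :
    ConnectedOn G (S ∪ Y) := by
  refine of_closedIn fun T hT ⟨t, ht⟩ hc => ?_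
  have hne : (T ∩ S).Nonempty := by
    rcases hT ht with hS | htY
    · exact ⟨t, ht, hS⟩
    · obtain ⟨x, hx, ha⟩ := hY t htY
      exact ⟨x, hc t ht x (.inl hx) ha, hx⟩
  have hST : S ⊆ T := Set.inter_eq_right.1 <| h.eq_of_closedIn Set.inter_subset_right hne
    fun a ha b hb hab => ⟨hc a ha.1 b (.inl hb) hab, hb⟩
  refine hT.antisymm (Set.union_subset hST fun y hy => ?_)
  obtain ⟨x, hx, ha⟩ := hY y hy
  exact hc x (hST hx) y (.inr hy) ha.symm

theorem insert (h : ConnectedOn G S) (hv : ∃ x ∈ S, G.Adj v x) :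
    ConnectedOn G (insert v S) := by
  rw [Set.insert_eq, Set.union_comm]
  exact h.union (by rintro y rfl; exact hv)

theorem exists_adj (h : ConnectedOn G S) (hR : (S ∩ R).Nonempty) (hK : K ⊆ S \ R)
    (hc : ClosedIn G K (S \ R)) (hne : K.Nonempty) : ∃ r ∈ S ∩ R, ∃ x ∈ K, G.Adj r x := by
  by_contra! hcon
  have : K = S := h.eq_of_closedIn (hK.trans Set.sdiff_subset) hne fun u hu v hv ha =>
    hc u hu v ⟨hv, fun hvR => hcon v ⟨hv, hvR⟩ u hu ha.symm⟩ ha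
  obtain ⟨r, hrS, hrR⟩ := hR
  exact (hK (this ▸ hrS)).2 hrR

theorem sdiff (h : ConnectedOn G S) (hR : ConnectedOn G R) (hRS : R ⊆ S) (hne : R.Nonempty)
    (hK : K ⊆ S \ R) (hc : ClosedIn G K (S \ R)) : ConnectedOn G (S \ K) := by
  have hRK : R ⊆ S \ K := fun r hr => ⟨hRS hr, fun hrK => (hK hrK).2 hr⟩
  have hmeet : ∀ T ⊆ S \ K, T.Nonempty → ClosedIn G T (S \ K) → (R ∩ T).Nonempty := by
    intro T hT hTne hcT
    by_contra hRT
    have hTR : T ⊆ S \ R := fun x hx => ⟨(hT hx).1, fun hxR => hRT ⟨x, hxR, hx⟩⟩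
    obtain ⟨r, ⟨_, hr⟩, x, hx, ha⟩ := h.exists_adj (hne.mono (Set.subset_inter hRS le_rfl)) hTR
      (fun u hu v hv ha => hcT u hu v ⟨hv.1, fun hvK => (hT hu).2 (hc v hvK u (hTR hu) ha.symm)⟩ ha)
      hTne
    exact hRT ⟨r, hr, hcT x hx r (hRK hr) ha.symm⟩
  refine of_closedIn fun T hT hTne hcT => hT.antisymm (Set.sdiff_eq_empty.1 ?_)
  by_contra hrest
  obtain ⟨r, hr, hrT⟩ := hmeet _ Set.sdiff_subset (Set.nonempty_iff_ne_empty.2 hrest) hcT.sdiff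
  have hRT : R ∩ T = R := hR.eq_of_closedIn Set.inter_subset_left (hmeet T hT hTne hcT)
    fun u hu v hv ha => ⟨hv, hcT u hu.2 v (hRK hv) ha⟩
  exact hrT.2 (hRT ▸ hr).2

end ConnectedOn

theorem connectedOn_componentIn : ConnectedOn G (componentIn G S v) := by
  refine .of_closedIn fun T hT ⟨x, hx⟩ hc => hT.antisymm ?_
  have hcl : ClosedIn G T S := fun y hy z hz ha =>
    hc y hy z (componentIn_closedIn y (hT hy) z hz ha) ha
  obtain ⟨_, p⟩ := hT hx
  exact hcl.componentIn_subset (hcl.mem_of_pathIn p.symm hx)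

end

/-! ### Links of nearly equal length -/

section

variable {V : Type*} {G : SimpleGraph V} {S T K A B A' B' R : Set V} {e e' s t w : V} {n r : ℕ}

/-- `Link G S A B n`: there is a path of length `n` inside `S` from a vertex of `A` to a vertex of
`B`. Such a link may have length `0`, and it may meet `A` and `B` in inner vertices too. -/
def Link (G : SimpleGraph V) (S A B : Set V) (n : ℕ) : Prop :=
  ∃ a ∈ A, ∃ b ∈ B, PathIn G S a b n

/-- The number, `0` or `1`, of marks that a vertex receives from a set of terminals. -/
noncomputable def mark (A : Set V) : V → ℕ := A.indicator 1

/-- The degree of `s` inside `S`, increased by the marks that `s` receives from `A` and `B`.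
Counting marks as edges keeps track of the neighbours lost when `S` is cut out of a larger
graph and the attachments to the rest become the new terminals. -/
noncomputable def markedDegree (G : SimpleGraph V) (S A B : Set V) (s : V) : ℕ :=
  (G.neighborSet s ∩ S).ncard + mark A s + mark B s

/-- Every part of `S` that `R` separates from the rest of `S` contains a terminal. -/
def Anchored (G : SimpleGraph V) (S A B R : Set V) : Prop :=
  ∀ T ⊆ S \ R, T.Nonempty → ClosedIn G T (S \ R) → ∃ v ∈ T, v ∈ A ∨ v ∈ B

/-- The conditions on a set `S` with terminals `A` and `B` under which close links exist. They
amount to minimum degree three and two-connectedness after joining `A` and `B` to one new vertex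
each; a single exceptional vertex `e` (which need not lie in `S`) may have degree two. -/
structure IsLinkable (G : SimpleGraph V) (S A B : Set V) (e : V) : Prop where
  connectedOn : ConnectedOn G S
  nonempty_left : (S ∩ A).Nonempty
  nonempty_right : (S ∩ B).Nonempty
  three_le : ∀ s ∈ S, s ≠ e → 3 ≤ markedDegree G S A B s
  two_le : e ∈ S → 2 ≤ markedDegree G S A B e
  exists_ne : ∃ s ∈ S, s ≠ e
  anchored : ∀ t ∈ S, Anchored G S A B {t}

/-- There are two links whose lengths differ by `d`. -/
def LinksApart (G : SimpleGraph V) (S A B : Set V) (d : ℕ) : Prop :=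
  ∃ n, Link G S A B n ∧ Link G S A B (n + d)

/-- An edge `pq` of `S` with both ends of marked degree at most three such that `{p, q}` separates
no part without terminals. -/
def HasLowEdge (G : SimpleGraph V) (S A B : Set V) : Prop :=
  ∃ p ∈ S, ∃ q ∈ S, G.Adj p q ∧ markedDegree G S A B p ≤ 3 ∧ markedDegree G S A B q ≤ 3 ∧
    Anchored G S A B {p, q}

/-- Two links have lengths differing by two, or by one; the second alternative is only allowed if
the exceptional vertex is present or there is a low edge. -/
def HasCloseLinks (G : SimpleGraph V) (S A B : Set V) (e : V) : Prop :=
  LinksApart G S A B 2 ∨ LinksApart G S A B 1 ∧ (e ∈ S ∨ HasLowEdge G S A B)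

theorem mark_le_one : mark A s ≤ 1 := Set.indicator_le_self' (by simp) s

theorem mark_of_mem (h : s ∈ A) : mark A s = 1 := Set.indicator_of_mem h 1

theorem mark_of_notMem (h : s ∉ A) : mark A s = 0 := Set.indicator_of_notMem h 1

theorem mark_union_le : mark (A ∪ B) s ≤ mark A s + mark B s :=
  le_of_add_le_left (Set.indicator_union_add_inter_apply 1 A B s).le

theorem ncard_le_mark {X : Set V} (hX : X.Subsingleton) (h : X.Nonempty → s ∈ A) :
    X.ncard ≤ mark A s := by
  rcases X.eq_empty_or_nonempty with rfl | hne
  · simp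
  · rw [mark_of_mem (h hne)]
    have := hX.finite.to_subtype
    exact Set.ncard_le_one_iff_subsingleton.2 hX

theorem markedDegree_symm : markedDegree G S A B s = markedDegree G S B A s :=
  add_right_comm _ _ _

theorem Link.symm (h : Link G S A B n) : Link G S B A n :=
  let ⟨a, ha, b, hb, p⟩ := h; ⟨b, hb, a, ha, p.symm⟩

theorem LinksApart.symm {d : ℕ} (h : LinksApart G S A B d) : LinksApart G S B A d :=
  let ⟨n, h₁, h₂⟩ := h; ⟨n, h₁.symm, h₂.symm⟩

theorem LinksApart.lift {d : ℕ} (h : LinksApart G K A' B' d)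
    (hL : ∀ n, Link G K A' B' n → Link G S A B (n + r)) : LinksApart G S A B d :=
  let ⟨n, h₁, h₂⟩ := h; ⟨n + r, hL _ h₁, add_right_comm n r d ▸ hL _ h₂⟩

theorem Anchored.symm (h : Anchored G S A B R) : Anchored G S B A R := fun T hT hne hc =>
  let ⟨v, hv, hvAB⟩ := h T hT hne hc; ⟨v, hv, hvAB.symm⟩

theorem HasLowEdge.symm (h : HasLowEdge G S A B) : HasLowEdge G S B A :=
  let ⟨p, hp, q, hq, ha, hp₃, hq₃, hpq⟩ := h
  ⟨p, hp, q, hq, ha, markedDegree_symm ▸ hp₃, markedDegree_symm ▸ hq₃, hpq.symm⟩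

theorem HasCloseLinks.symm (h : HasCloseLinks G S A B e) : HasCloseLinks G S B A e :=
  h.imp LinksApart.symm (And.imp LinksApart.symm (Or.imp_right HasLowEdge.symm))

theorem IsLinkable.symm (h : IsLinkable G S A B e) : IsLinkable G S B A e where
  connectedOn := h.connectedOn
  nonempty_left := h.nonempty_right
  nonempty_right := h.nonempty_left
  three_le s hs he := markedDegree_symm ▸ h.three_le s hs he
  two_le he := markedDegree_symm ▸ h.two_le he
  exists_ne := h.exists_ne
  anchored t ht := (h.anchored t ht).symm

theorem Anchored.restrict (h : Anchored G S A B R) (hK : K ⊆ S)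
    (hmark : ∀ s ∈ K, (s ∈ A ∨ s ∈ B ∨ ∃ x ∈ S \ K, G.Adj s x) → s ∈ A' ∨ s ∈ B') :
    Anchored G K A' B' R := by
  intro T hT hne hc
  by_contra! hno
  have hnot : ∀ v ∈ T, ¬ (v ∈ A' ∨ v ∈ B') := fun v hv => not_or.2 (hno v hv)
  obtain ⟨v, hv, hvAB⟩ := h T (hT.trans (Set.sdiff_subset_sdiff_left hK)) hne
    fun u hu v hv ha => by
      by_cases hvK : v ∈ K
      · exact hc u hu v ⟨hvK, hv.2⟩ ha
      · exact absurd (hmark u (hT hu).1 (.inr (.inr ⟨v, ⟨hv.1, hvK⟩, ha⟩))) (hnot u hu)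
  exact hnot v hv (hmark v (hT hv).1 (or_assoc.1 (.inl hvAB)))

theorem Anchored.extend (h : Anchored G K A' B' R) (hRK : R ⊆ K) (hK : K ⊆ S)
    (hmark : ∀ s ∈ K, s ∈ A' ∨ s ∈ B' → s ∈ A ∨ s ∈ B ∨ ∃ x ∈ S \ K, G.Adj s x)
    (hS : Anchored G S A B K) : Anchored G S A B R := by
  intro T hT hne hc
  by_contra! hno
  have hTK : T ⊆ K := by
    by_contra hTK
    obtain ⟨v, hv, hvAB⟩ := hS (T \ K) (fun x hx => ⟨(hT hx.1).1, hx.2⟩)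
      (Set.sdiff_nonempty.2 hTK)
      fun u hu v hv ha => ⟨hc u hu.1 v ⟨hv.1, fun hvR => hv.2 (hRK hvR)⟩ ha, hv.2⟩
    exact hvAB.elim (hno v hv.1).1 (hno v hv.1).2
  obtain ⟨v, hv, hvAB⟩ := h T (fun x hx => ⟨hTK hx, (hT hx).2⟩) hne
    fun u hu v hv ha => hc u hu v ⟨hK hv.1, hv.2⟩ ha
  rcases hmark v (hTK hv) hvAB with hA | hB | ⟨x, hx, ha⟩
  · exact (hno v hv).1 hA
  · exact (hno v hv).2 hB
  · exact hx.2 (hTK (hc v hv x ⟨hx.1, fun hxR => hx.2 (hRK hxR)⟩ ha))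

theorem ClosedIn.anchored (hK : ClosedIn G K (S \ A)) (hS : ConnectedOn G S)
    (hA : (S ∩ A).Nonempty) : Anchored G S A B K := by
  intro T hT hne hc
  by_contra! hno
  obtain ⟨a, haS, haA⟩ := hA
  have hTS : T = S := hS.eq_of_closedIn (hT.trans Set.sdiff_subset) hne fun u hu v hv ha => by
    by_cases hvK : v ∈ K
    · exact absurd (hK v hvK u ⟨(hT hu).1, (hno u hu).1⟩ ha.symm) (hT hu).2
    · exact hc u hu v ⟨hv, hvK⟩ ha
  exact (hno a (hTS ▸ haS)).1 haA

/-- A counterexample to the existence of close links that is minimal with respect to inclusion of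
the ambient set, over all choices of terminals and exceptional vertex. -/
structure MinimalUnlinked (G : SimpleGraph V) (S A B : Set V) (e : V) : Prop
    extends IsLinkable G S A B e where
  not_hasCloseLinks : ¬ HasCloseLinks G S A B e
  minimal : ∀ K ⊂ S, ∀ A' B' e', IsLinkable G K A' B' e' → HasCloseLinks G K A' B' e'

namespace MinimalUnlinked

theorem symm (h : MinimalUnlinked G S A B e) : MinimalUnlinked G S B A e where
  toIsLinkable := h.toIsLinkable.symm
  not_hasCloseLinks hc := h.not_hasCloseLinks hc.symm
  minimal := h.minimal

theorem false_of_reduction (h : MinimalUnlinked G S A B e) (hKS : K ⊂ S) (hK : ConnectedOn G K)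
    (hA' : (K ∩ A').Nonempty) (hB' : (K ∩ B').Nonempty) (hne : ∃ s ∈ K, s ≠ e)
    (hdeg : ∀ s ∈ K, markedDegree G S A B s ≤ markedDegree G K A' B' s)
    (hmark : ∀ s ∈ K, s ∈ A' ∨ s ∈ B' ↔ s ∈ A ∨ s ∈ B ∨ ∃ x ∈ S \ K, G.Adj s x)
    (hS : Anchored G S A B K) (r : ℕ)
    (hlift : ∀ n, Link G K A' B' n → Link G S A B (n + r)) : False := by
  have hlinkable : IsLinkable G K A' B' e :=
    { connectedOn := hK
      nonempty_left := hA'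
      nonempty_right := hB'
      three_le := fun s hs he => (h.three_le s (hKS.1 hs) he).trans (hdeg s hs)
      two_le := fun he => (h.two_le (hKS.1 he)).trans (hdeg e he)
      exists_ne := hne
      anchored := fun t ht =>
        (h.anchored t (hKS.1 ht)).restrict hKS.1 fun s hs => (hmark s hs).2 }
  rcases h.minimal K hKS A' B' e hlinkable with h₂ | ⟨h₁, he | hlow⟩
  · exact h.not_hasCloseLinks (.inl (h₂.lift hlift))
  · exact h.not_hasCloseLinks (.inr ⟨h₁.lift hlift, .inl (hKS.1 he)⟩)
  · obtain ⟨p, hp, q, hq, ha, hp₃, hq₃, hpq⟩ := hlow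
    exact h.not_hasCloseLinks (.inr ⟨h₁.lift hlift, .inr ⟨p, hKS.1 hp, q, hKS.1 hq, ha,
      (hdeg p hp).trans hp₃, (hdeg q hq).trans hq₃,
      hpq.extend (Set.pair_subset hp hq) hKS.1 (fun s hs => (hmark s hs).1) hS⟩⟩)

end MinimalUnlinked

variable [Finite V]

theorem ncard_neighborSet_inter_le_add_sdiff (S K : Set V) (s : V) :
    (G.neighborSet s ∩ S).ncard ≤
      (G.neighborSet s ∩ K).ncard + (G.neighborSet s ∩ (S \ K)).ncard := by
  refine (Set.ncard_le_ncard (fun x hx => ?_) (Set.toFinite _)).trans (Set.ncard_union_le _ _)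
  by_cases hxK : x ∈ K
  exacts [.inl ⟨hx.1, hxK⟩, .inr ⟨hx.1, hx.2, hxK⟩]

theorem ncard_neighborSet_inter_le_add_mark
    (hsub : (G.neighborSet s ∩ (S \ K)).Subsingleton)
    (hA' : ∀ x ∈ S \ K, G.Adj s x → s ∈ A') :
    (G.neighborSet s ∩ S).ncard ≤ (G.neighborSet s ∩ K).ncard + mark A' s :=
  (ncard_neighborSet_inter_le_add_sdiff S K s).trans
    (Nat.add_le_add_left (ncard_le_mark hsub fun ⟨x, hx⟩ => hA' x hx.2 hx.1) _)

namespace MinimalUnlinked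

theorem false_of_component (h : MinimalUnlinked G S A B e) (ht : t ∈ S) (hKt : K ⊆ S \ {t})
    (hK : ConnectedOn G K) (hcl : ClosedIn G K (S \ {t})) (hB : ∀ b ∈ K, b ∉ B)
    (hne : ∃ s ∈ K, s ≠ e) : False := by
  have hKS : K ⊆ S := hKt.trans Set.sdiff_subset
  have htK : t ∉ K := fun htK => (hKt htK).2 rfl
  have hKne : K.Nonempty := let ⟨s, hs, _⟩ := hne; ⟨s, hs⟩
  have hbd : ∀ s ∈ K, ∀ x ∈ S \ K, G.Adj s x → x = t := fun s hs x => hcl.mem_of_adj hs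
  have hrest : ConnectedOn G (S \ K) :=
    h.connectedOn.sdiff .singleton (Set.singleton_subset_iff.2 ht) (Set.singleton_nonempty t)
      hKt hcl
  obtain ⟨b, hbS, hbB⟩ := h.nonempty_right
  have hbK : b ∈ S \ K := ⟨hbS, fun hbK => hB b hbK hbB⟩
  obtain ⟨m, hm⟩ := hrest.exists_pathIn ⟨ht, htK⟩ hbK
  refine h.false_of_reduction (K := K) (A' := A) (B' := G.neighborSet t)
    ⟨hKS, fun hSK => htK (hSK ht)⟩ hK ?_ ?_ hne (fun s hs => ?_) (fun s hs => ⟨?_, ?_⟩) ?_ (m + 1)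
    ?_
  · obtain ⟨v, hv, hvA | hvB⟩ := h.anchored t ht K hKt hKne hcl
    exacts [⟨v, hv, hvA⟩, absurd hvB (hB v hv)]
  · obtain ⟨_, ⟨_, rfl⟩, x, hx, ha⟩ :=
      h.connectedOn.exists_adj (R := {t}) ⟨t, ht, rfl⟩ hKt hcl hKne
    exact ⟨x, hx, ha⟩
  · have hle := ncard_neighborSet_inter_le_add_mark (G := G) (S := S) (K := K) (s := s)
      (A' := G.neighborSet t)
      (fun x hx y hy => (hbd s hs x hx.2 hx.1).trans (hbd s hs y hy.2 hy.1).symm)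
      fun x hx ha => hbd s hs x hx ha ▸ ha.symm
    have hsB := mark_of_notMem (hB s hs)
    unfold markedDegree
    omega
  · rintro (hsA | hst)
    exacts [.inl hsA, .inr (.inr ⟨t, ⟨ht, htK⟩, hst.symm⟩)]
  · rintro (hsA | hsB | ⟨x, hx, ha⟩)
    exacts [.inl hsA, absurd hsB (hB s hs), .inr (hbd s hs x hx ha ▸ ha.symm)]
  · intro T hT hTne hTc
    exact ⟨b, hrest.eq_of_closedIn hT hTne hTc ▸ hbK, .inr hbB⟩
  · rintro n ⟨a, ha, y, hy, p⟩
    exact ⟨a, ha, b, hbB, p.append hm hy.symm Set.disjoint_sdiff_right hKS Set.sdiff_subset⟩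

theorem mem_left_of_pendant (h : MinimalUnlinked G S A B e) (he : e ∈ S)
    (hN : ∀ x ∈ S, G.Adj e x → x = t) (heB : e ∉ B) : e ∈ A := by
  by_contra heA
  have hdeg : (G.neighborSet e ∩ S).ncard ≤ 1 := Set.ncard_le_one_iff_subsingleton.2
    fun x hx y hy => (hN x hx.2 hx.1).trans (hN y hy.2 hy.1).symm
  have htwo := h.two_le he
  rw [markedDegree, mark_of_notMem heA, mark_of_notMem heB] at htwo
  omega

theorem anchored_sdiff_pendant (h : MinimalUnlinked G S A B e) (ht : t ∈ S) (hte : t ≠ e)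
    (hN : ∀ x ∈ S, G.Adj e x → x = t) (heB : e ∉ B) {t' : V} (ht' : t' ∈ S \ {e}) :
    Anchored G (S \ {e}) A B {t'} := by
  intro T hT hne hc
  by_contra! hno
  by_cases htT : t ∈ T
  · have hcl : ClosedIn G (insert e T) (S \ {t'}) := by
      rintro u (rfl | hu) v hv ha
      · exact .inr (hN v hv.1 ha ▸ htT)
      · by_cases hve : v = e
        exacts [.inl hve, .inr (hc u hu v ⟨⟨hv.1, hve⟩, hv.2⟩ ha)]
    refine h.false_of_component ht'.1 componentIn_subset connectedOn_componentIn
      componentIn_closedIn (fun y hy => ?_) ⟨t, mem_componentIn_self ⟨ht, (hT htT).2⟩, hte⟩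
    rcases hcl.componentIn_subset (.inr htT) hy with rfl | hyT
    exacts [heB, (hno y hyT).2]
  · have hcl : ClosedIn G T (S \ {t'}) := fun u hu v hv ha => by
      refine hc u hu v ⟨⟨hv.1, ?_⟩, hv.2⟩ ha
      rintro rfl
      exact htT (hN u (hT hu).1.1 ha.symm ▸ hu)
    obtain ⟨v, hv, hvA | hvB⟩ :=
      h.anchored t' ht'.1 T (fun x hx => ⟨(hT hx).1.1, (hT hx).2⟩) hne hcl
    exacts [(hno v hv).1 hvA, (hno v hv).2 hvB]

theorem false_of_pendant_of_exists_ne (h : MinimalUnlinked G S A B e) (ht : t ∈ S) (he : e ∈ S)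
    (hte : t ≠ e) (hN : ∀ x ∈ S, G.Adj e x → x = t) (heB : e ∉ B) (htA : t ∉ A)
    (hrest : ConnectedOn G (S \ {e})) (hA : ∃ a ∈ S, a ∈ A ∧ a ≠ e) : False := by
  obtain ⟨a, haS, haA, hae⟩ := hA
  obtain ⟨b, hbS, hbB⟩ := h.nonempty_right
  have hmono : ∀ n, Link G (S \ {e}) A B n → Link G S A B (n + 0) :=
    fun n ⟨a, ha, b, hb, p⟩ => ⟨a, ha, b, hb, p.mono Set.sdiff_subset⟩
  have hdeg : ∀ s ∈ S \ {e}, s ≠ t →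
      markedDegree G S A B s ≤ markedDegree G (S \ {e}) A B s := fun s hs hst => by
    refine Nat.add_le_add_right (Nat.add_le_add_right (Set.ncard_le_ncard ?_) _) _
    refine fun x hx => ⟨hx.1, hx.2, ?_⟩
    rintro rfl
    exact hst (hN s hs.1 hx.1.symm)
  have hdeg_t : markedDegree G S A B t ≤ markedDegree G (S \ {e}) A B t + 1 := by
    have hsplit := ncard_neighborSet_inter_le_add_sdiff (G := G) S (S \ {e}) t
    have hone : (G.neighborSet t ∩ (S \ (S \ {e}))).ncard ≤ 1 := by
      rw [Set.sdiff_sdiff_cancel_left (Set.singleton_subset_iff.2 he)]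
      exact (Set.ncard_le_ncard Set.inter_subset_right).trans_eq (Set.ncard_singleton e)
    unfold markedDegree
    omega
  have hlinkable : IsLinkable G (S \ {e}) A B t :=
    { connectedOn := hrest
      nonempty_left := ⟨a, ⟨haS, hae⟩, haA⟩
      nonempty_right := ⟨b, ⟨hbS, fun hbe => heB (hbe ▸ hbB)⟩, hbB⟩
      three_le := fun s hs hst => (h.three_le s hs.1 hs.2).trans (hdeg s hs hst)
      two_le := fun _ => Nat.le_of_succ_le_succ ((h.three_le t ht hte).trans hdeg_t)
      exists_ne := ⟨a, ⟨haS, hae⟩, fun hat => htA (hat ▸ haA)⟩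
      anchored := fun _ => h.anchored_sdiff_pendant ht hte hN heB }
  have hlt : S \ {e} ⊂ S := ⟨Set.sdiff_subset, fun hS => (hS he).2 rfl⟩
  rcases h.minimal _ hlt A B t hlinkable with h₂ | ⟨h₁, -⟩
  · exact h.not_hasCloseLinks (.inl (h₂.lift hmono))
  · exact h.not_hasCloseLinks (.inr ⟨h₁.lift hmono, .inl he⟩)

theorem false_of_pendant_of_forall_eq (h : MinimalUnlinked G S A B e) (ht : t ∈ S) (he : e ∈ S)
    (hte : t ≠ e) (hN : ∀ x ∈ S, G.Adj e x → x = t) (heA : e ∈ A) (heB : e ∉ B)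
    (hat : G.Adj e t) (hrest : ConnectedOn G (S \ {e})) (hA : ∀ a ∈ S, a ∈ A → a = e) :
    False := by
  have hcompl : S \ (S \ {e}) = {e} :=
    Set.sdiff_sdiff_cancel_left (Set.singleton_subset_iff.2 he)
  have hst : ∀ s ∈ S \ {e}, ∀ x ∈ S \ (S \ {e}), G.Adj s x → s = t := by
    rw [hcompl]
    rintro s hs _ rfl ha
    exact hN s hs.1 ha.symm
  obtain ⟨b, hbS, hbB⟩ := h.nonempty_right
  refine h.false_of_reduction (K := S \ {e}) (A' := {t}) (B' := B)
    ⟨Set.sdiff_subset, fun hS => (hS he).2 rfl⟩ hrest ⟨t, ⟨ht, hte⟩, rfl⟩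
    ⟨b, ⟨hbS, fun hbe => heB (hbe ▸ hbB)⟩, hbB⟩ ⟨t, ⟨ht, hte⟩, hte⟩ (fun s hs => ?_)
    (fun s hs => ⟨?_, ?_⟩) ?_ 1 ?_
  · have hle := ncard_neighborSet_inter_le_add_mark (G := G) (S := S) (K := S \ {e}) (s := s)
      (A' := {t}) (hcompl.symm ▸ Set.subsingleton_singleton.anti Set.inter_subset_right) (hst s hs)
    have hsA : mark A s = 0 := mark_of_notMem fun hsA => hs.2 (hA s hs.1 hsA)
    unfold markedDegree
    omega
  · rintro (rfl | hsB)
    exacts [.inr (.inr ⟨e, hcompl.symm ▸ rfl, hat.symm⟩), .inr (.inl hsB)]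
  · rintro (hsA | hsB | ⟨x, hx, ha⟩)
    exacts [absurd (hA s hs.1 hsA) hs.2, .inr hsB, .inl (hst s hs x hx ha)]
  · rintro T hT ⟨x, hx⟩ -
    have hxe : x = e := (hcompl.subset (hT hx) :)
    exact ⟨x, hx, .inl (hxe ▸ heA)⟩
  · rintro n ⟨x, hx, b, hb, p⟩
    obtain rfl : x = t := hx
    exact ⟨e, heA, b, hb, .cons he hat p⟩

theorem false_of_pendant (h : MinimalUnlinked G S A B e) (ht : t ∈ S) (he : e ∈ S) (hte : t ≠ e)
    (hcl : ClosedIn G {e} (S \ {t})) (heB : e ∉ B) : False := by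
  have hsub : ({e} : Set V) ⊆ S \ {t} := Set.singleton_subset_iff.2 ⟨he, hte.symm⟩
  have hN : ∀ x ∈ S, G.Adj e x → x = t := fun x hx ha =>
    hcl.mem_of_adj (Set.mem_singleton e) ⟨hx, ha.ne'⟩ ha
  have hrest : ConnectedOn G (S \ {e}) :=
    h.connectedOn.sdiff .singleton (Set.singleton_subset_iff.2 ht) (Set.singleton_nonempty t)
      hsub hcl
  obtain ⟨r, ⟨_, hr⟩, x, hx, hat⟩ :=
    h.connectedOn.exists_adj ⟨t, ht, Set.mem_singleton t⟩ hsub hcl ⟨e, rfl⟩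
  rw [Set.mem_singleton_iff.1 hr, Set.mem_singleton_iff.1 hx] at hat
  have heA : e ∈ A := h.mem_left_of_pendant he hN heB
  by_cases htA : t ∈ A
  · obtain ⟨b, hbS, hbB⟩ := h.nonempty_right
    obtain ⟨m, p⟩ := hrest.exists_pathIn ⟨ht, hte⟩ ⟨hbS, fun hbe => heB (hbe ▸ hbB)⟩
    exact h.not_hasCloseLinks (.inr ⟨⟨m, ⟨t, htA, b, hbB, p.mono Set.sdiff_subset⟩,
      ⟨e, heA, b, hbB, .cons he hat.symm p⟩⟩, .inl he⟩)
  by_cases hA : ∃ a ∈ S, a ∈ A ∧ a ≠ e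
  · exact h.false_of_pendant_of_exists_ne ht he hte hN heB htA hrest hA
  · exact h.false_of_pendant_of_forall_eq ht he hte hN heA heB hat.symm hrest (by grind)

theorem exists_mem_right (h : MinimalUnlinked G S A B e) (ht : t ∈ S) (hT : T ⊆ S \ {t})
    (hne : T.Nonempty) (hcl : ClosedIn G T (S \ {t})) : ∃ v ∈ T, v ∈ B := by
  by_contra! hno
  obtain ⟨x, hx⟩ := hne
  have hsub : componentIn G (S \ {t}) x ⊆ T := hcl.componentIn_subset hx
  have hxK := mem_componentIn_self (G := G) (hT hx)
  by_cases hne : ∃ s ∈ componentIn G (S \ {t}) x, s ≠ e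
  · exact h.false_of_component ht componentIn_subset connectedOn_componentIn componentIn_closedIn
      (fun b hb => hno b (hsub hb)) hne
  · push Not at hne
    obtain rfl := hne x hxK
    have heq : componentIn G (S \ {t}) x = {x} :=
      Set.Subset.antisymm hne (Set.singleton_subset_iff.2 hxK)
    exact h.false_of_pendant ht (hT hx).1 (fun htx => (hT hx).2 htx.symm)
      (heq ▸ componentIn_closedIn) (hno x hx)

theorem subsingleton_neighborSet_inter (h : MinimalUnlinked G S A B e) (hw : w ∈ S) :
    (G.neighborSet w ∩ S ∩ A).Subsingleton := by
  intro u hu v hv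
  by_contra huv
  obtain ⟨b, ⟨n, p⟩, hb⟩ := h.exists_mem_right hw componentIn_subset
    ⟨u, mem_componentIn_self ⟨hu.1.2, hu.1.1.ne'⟩⟩ componentIn_closedIn
  obtain ⟨r, ⟨hr, -⟩, m, q⟩ := p.exists_last (R := {u, v}) (.inl rfl)
  have two_apart : ∀ x y, x ∈ G.neighborSet w ∩ S ∩ A → y ∈ G.neighborSet w ∩ S ∩ A → x ≠ y →
      PathIn G (insert x ((S \ {w}) \ {x, y})) x b m → LinksApart G S A B 2 := by
    rintro x y ⟨⟨hwx, hxS⟩, hxA⟩ ⟨⟨hwy, hyS⟩, hyA⟩ hxy p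
    refine ⟨m, ⟨x, hxA, b, hb, p.mono ?_⟩,
      ⟨y, hyA, b, hb, .cons hyS hwy.symm (.cons ⟨hw, hwy.ne⟩ hwx (p.mono ?_))⟩⟩
    · exact Set.insert_subset hxS (Set.sdiff_subset.trans Set.sdiff_subset)
    · refine Set.insert_subset ⟨⟨hxS, hxy⟩, hwx.ne'⟩ fun z hz => ?_
      exact ⟨⟨hz.1.1, fun hzy => hz.2 (.inr hzy)⟩, hz.1.2⟩
  refine h.not_hasCloseLinks (.inl ?_)
  rcases hr with rfl | rfl
  · exact two_apart _ v hu hv huv q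
  · exact two_apart _ u hv hu (Ne.symm huv) (Set.pair_comm u _ ▸ q)

theorem ncard_le_add_mark_of_closedIn (h : MinimalUnlinked G S A B e) (hKS : K ⊆ S)
    (hcl : ClosedIn G K (S \ A)) (hs : s ∈ K) (hA' : ∀ x ∈ S \ K, G.Adj s x → s ∈ A') :
    (G.neighborSet s ∩ S).ncard ≤ (G.neighborSet s ∩ K).ncard + mark A' s :=
  ncard_neighborSet_inter_le_add_mark ((h.subsingleton_neighborSet_inter (hKS hs)).anti
    fun _ hx => ⟨⟨hx.1, hx.2.1⟩, hcl.mem_of_adj hs hx.2 hx.1⟩) hA'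

theorem exists_two_adj (h : MinimalUnlinked G S A B e) (hKA : K ⊆ S \ A)
    (hcl : ClosedIn G K (S \ A)) (hne : K.Nonempty) :
    ∃ a₁ ∈ S ∩ A, ∃ a₂ ∈ S ∩ A, ∃ x₁ ∈ K, ∃ x₂ ∈ K,
      a₁ ≠ a₂ ∧ x₁ ≠ x₂ ∧ G.Adj a₁ x₁ ∧ G.Adj a₂ x₂ := by
  obtain ⟨a, ha, x, hx, hax⟩ := h.connectedOn.exists_adj h.nonempty_left hKA hcl hne
  obtain ⟨y, hy, c, hc, hca, hcy⟩ : ∃ y ∈ K, ∃ c ∈ S ∩ A, c ≠ a ∧ G.Adj c y := by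
    by_contra! hno
    obtain ⟨v, hv, hvA⟩ := h.symm.exists_mem_right (T := K) ha.1
      (fun y hy => ⟨(hKA hy).1, fun hya => (hKA hy).2 (hya ▸ ha.2)⟩) hne fun u hu v hv huv => by
        by_contra hvK
        exact hno u hu v ⟨hv.1, hcl.mem_of_adj hu ⟨hv.1, hvK⟩ huv⟩ hv.2 huv.symm
    exact (hKA hv).2 hvA
  refine ⟨a, ha, c, hc, x, hx, y, hy, hca.symm, ?_, hax, hcy⟩
  rintro rfl
  exact hca (h.subsingleton_neighborSet_inter (hKA hx).1 ⟨⟨hcy.symm, hc.1⟩, hc.2⟩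
    ⟨⟨hax.symm, ha.1⟩, ha.2⟩)

theorem subset_left (h : MinimalUnlinked G S A B e) (hs : s ∈ S) (hsB : s ∈ B) : s ∈ A := by
  by_contra hsA
  set K := componentIn G (S \ A) s
  have hKA : K ⊆ S \ A := componentIn_subset
  have hKS : K ⊆ S := hKA.trans Set.sdiff_subset
  have hsK : s ∈ K := mem_componentIn_self ⟨hs, hsA⟩
  have hcl : ClosedIn G K (S \ A) := componentIn_closedIn
  obtain ⟨a, ha, -, -, x, hx, y, hy, -, hxy, hax, -⟩ := h.exists_two_adj hKA hcl ⟨s, hsK⟩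
  let A' : Set V := {v | ∃ a ∈ S ∩ A, G.Adj a v}
  have hA' : ∀ s ∈ K, ∀ x ∈ S \ K, G.Adj s x → s ∈ A' := fun s hs x hx hsx =>
    ⟨x, ⟨hx.1, hcl.mem_of_adj hs hx hsx⟩, hsx.symm⟩
  refine h.false_of_reduction (K := K) (A' := A') (B' := B)
    ⟨hKS, fun hSK => (hKA (hSK ha.1)).2 ha.2⟩ connectedOn_componentIn ⟨x, hx, a, ha, hax⟩
    ⟨s, hsK, hsB⟩ (by grind) (fun s hs => ?_) (fun s hs => ⟨?_, ?_⟩)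
    (hcl.anchored h.connectedOn h.nonempty_left) 1 ?_
  · have hle := h.ncard_le_add_mark_of_closedIn hKS hcl hs (hA' s hs)
    have hsA : mark A s = 0 := mark_of_notMem (hKA hs).2
    unfold markedDegree
    omega
  · rintro (⟨a, ha, has⟩ | hsB)
    exacts [.inr (.inr ⟨a, ⟨ha.1, fun haK => (hKA haK).2 ha.2⟩, has.symm⟩), .inr (.inl hsB)]
  · rintro (hsA | hsB | ⟨x, hx, hsx⟩)
    exacts [absurd hsA (hKA hs).2, .inr hsB, .inl (hA' s hs x hx hsx)]
  · rintro n ⟨y, ⟨a, ha, hay⟩, b, hb, p⟩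
    exact ⟨a, ha.2, b, hb, .cons ha.1 hay (p.mono
      (Set.subset_sdiff_singleton hKS fun haK => (hKA haK).2 ha.2))⟩

theorem exists_notMem (h : MinimalUnlinked G S A B e) (hAB : ∀ s ∈ S, s ∈ A ↔ s ∈ B) :
    ∃ s ∈ S, s ∉ A := by
  by_contra! hall
  have hdeg : ∀ s ∈ S, (G.neighborSet s ∩ S).ncard ≤ 1 := fun s hs =>
    Set.ncard_le_one_iff_subsingleton.2
      ((h.subsingleton_neighborSet_inter hs).anti fun x hx => ⟨hx, hall x hx.2⟩)
  have hmarks : ∀ s, mark A s ≤ 1 ∧ mark B s ≤ 1 := fun s => ⟨mark_le_one, mark_le_one⟩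
  have hlow : ∀ s ∈ S, markedDegree G S A B s ≤ 3 := fun s hs => by
    have := hdeg s hs
    have := hmarks s
    unfold markedDegree
    omega
  obtain ⟨p, hp, hpe⟩ := h.exists_ne
  obtain ⟨q, hpq, hq⟩ : (G.neighborSet p ∩ S).Nonempty := by
    have hthree := h.three_le p hp hpe
    have := hmarks p
    unfold markedDegree at hthree
    exact Set.nonempty_of_ncard_ne_zero (by omega)
  refine h.not_hasCloseLinks (.inr ⟨⟨0, ⟨p, hall p hp, p, (hAB p hp).1 (hall p hp), .nil hp⟩,
    ⟨p, hall p hp, q, (hAB q hq).1 (hall q hq), .cons hp hpq (.nil ⟨hq, hpq.ne'⟩)⟩⟩,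
    .inr ⟨p, hp, q, hq, hpq, hlow p hp, hlow q hq, ?_⟩⟩)
  rintro T hT ⟨x, hx⟩ -
  exact ⟨x, hx, .inl (hall x (hT hx).1)⟩

theorem false_of_forall_mem_iff (h : MinimalUnlinked G S A B e)
    (hAB : ∀ s ∈ S, s ∈ A ↔ s ∈ B) : False := by
  obtain ⟨s, hs, hsA⟩ := h.exists_notMem hAB
  set K := componentIn G (S \ A) s
  have hKA : K ⊆ S \ A := componentIn_subset
  have hKB : ∀ s ∈ K, s ∉ B := fun s hs hsB => (hKA hs).2 ((hAB s (hKA hs).1).2 hsB)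
  have hKS : K ⊆ S := hKA.trans Set.sdiff_subset
  have hcl : ClosedIn G K (S \ A) := componentIn_closedIn
  obtain ⟨a, ha, u, hu, x, hx, y, hy, hau, hxy, hax, huy⟩ :=
    h.exists_two_adj hKA hcl ⟨s, mem_componentIn_self ⟨hs, hsA⟩⟩
  have huK : u ∉ K := fun huK => (hKA huK).2 hu.2
  let A' : Set V := {v | ∃ a ∈ S ∩ A, a ≠ u ∧ G.Adj a v}
  have hbd : ∀ s ∈ K, ∀ x ∈ S \ K, G.Adj s x → s ∈ A' ∪ G.neighborSet u := fun s hs x hx hsx => by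
    by_cases hxu : x = u
    · exact .inr (hxu ▸ hsx.symm)
    · exact .inl ⟨x, ⟨hx.1, hcl.mem_of_adj hs hx hsx⟩, hxu, hsx.symm⟩
  refine h.false_of_reduction (K := K) (A' := A') (B' := G.neighborSet u)
    ⟨hKS, fun hSK => huK (hSK hu.1)⟩ connectedOn_componentIn ⟨x, hx, a, ha, hau, hax⟩
    ⟨y, hy, huy⟩ (by grind) (fun s hs => ?_) (fun s hs => ⟨?_, ?_⟩)
    (hcl.anchored h.connectedOn h.nonempty_left) 2 ?_
  · have hle := h.ncard_le_add_mark_of_closedIn hKS hcl hs (hbd s hs)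
    have hunion := mark_union_le (A := A') (B := G.neighborSet u) (s := s)
    have hsA : mark A s = 0 := mark_of_notMem (hKA hs).2
    have hsB : mark B s = 0 := mark_of_notMem (hKB s hs)
    unfold markedDegree
    omega
  · rintro (⟨a, ha, -, has⟩ | hus)
    exacts [.inr (.inr ⟨a, ⟨ha.1, fun haK => (hKA haK).2 ha.2⟩, has.symm⟩),
      .inr (.inr ⟨u, ⟨hu.1, huK⟩, hus.symm⟩)]
  · rintro (hsA | hsB | ⟨x, hx, hsx⟩)
    exacts [absurd hsA (hKA hs).2, absurd hsB (hKB s hs), hbd s hs x hx hsx]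
  · rintro n ⟨z, ⟨a, ha, hau, haz⟩, b, hb, p⟩
    refine ⟨a, ha.2, u, (hAB u hu.1).1 hu.2,
      .cons ha.1 haz (p.append (.nil (Set.mem_singleton u)) hb.symm
      (Set.disjoint_singleton_right.2 huK) ?_ (Set.singleton_subset_iff.2 ⟨hu.1, hau.symm⟩))⟩
    exact Set.subset_sdiff_singleton hKS fun haK => (hKA haK).2 ha.2

end MinimalUnlinked

theorem IsLinkable.hasCloseLinks (h : IsLinkable G S A B e) : HasCloseLinks G S A B e := by
  induction S using WellFoundedLT.induction generalizing A B e with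
  | ind S ih =>
    by_contra hno
    have hmin : MinimalUnlinked G S A B e :=
      { toIsLinkable := h
        not_hasCloseLinks := hno
        minimal := fun K hK A' B' e' => ih K hK }
    exact hmin.false_of_forall_mem_iff fun s hs => ⟨hmin.symm.subset_left hs, hmin.subset_left hs⟩

theorem IsLinkable.exists_linksApart (h : IsLinkable G S A B e) :
    ∃ d, (d = 1 ∨ d = 2) ∧ LinksApart G S A B d := by
  rcases h.hasCloseLinks with h₂ | ⟨h₁, -⟩
  exacts [⟨2, .inr rfl, h₂⟩, ⟨1, .inl rfl, h₁⟩]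

end

/-! ### Graphs with a triangle -/

section

variable {V : Type*} {G : SimpleGraph V} {C H K R T X Z : Set V} {e s u v w x y z : V}
  {d k l n : ℕ}

namespace KConnected

theorem finite (h : KConnected G k) : Finite V :=
  Nat.finite_of_card_ne_zero (Nat.ne_zero_of_lt h.1)

theorem mem_or_mem (h : KConnected G k) (hC : C.Nonempty) (hZ : Z.ncard < k)
    (hcl : ClosedIn G C Zᶜ) (w : V) : w ∈ C ∨ w ∈ Z := by
  have := h.finite
  have hconn : ConnectedOn G (Z \ C)ᶜ :=
    (h.2 _ (Set.toFinite _) ((Set.ncard_le_ncard Set.sdiff_subset).trans_lt hZ)).preconnected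
  have hCZ : C = (Z \ C)ᶜ := hconn.eq_of_closedIn (fun x hx hx' => hx'.2 hx) hC
    fun u hu v hv ha => by_contra fun hvC => hvC (hcl u hu v (fun hvZ => hv ⟨hvZ, hvC⟩) ha)
  by_contra! hw
  exact hw.1 (hCZ.superset fun h => hw.2 h.1)

theorem exists_adj (h : KConnected G k) (hC : C.Nonempty) (hZ : Z.ncard ≤ k)
    (hcl : ClosedIn G C Zᶜ) (hz : z ∈ Z \ C) : ∃ c ∈ C, G.Adj c z := by
  have := h.finite
  by_contra! hno
  have hlt : (Z \ {z}).ncard < k := (Set.ncard_sdiff_singleton_lt_of_mem hz.1).trans_le hZ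
  refine (h.mem_or_mem hC hlt (fun u hu v hv ha => hcl u hu v (fun hvZ => ?_) ha) z).elim hz.2
    fun h => h.2 rfl
  exact hv ⟨hvZ, fun hvz => hno u hu (Set.mem_singleton_iff.1 hvz ▸ ha)⟩

end KConnected

theorem PathIn.of_isClique (hX : G.IsClique X) (hx : x ∈ X) (hy : y ∈ X) (hxy : x ≠ y)
    (hn : 1 ≤ n) (hnX : n < X.ncard) : PathIn G X x y n := by
  have hfin : X.Finite := Set.finite_of_ncard_pos (Nat.zero_lt_of_lt hnX)
  induction n, hn using Nat.le_induction generalizing X x with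
  | base => exact .cons hx (hX hx hy hxy) (.nil ⟨hy, hxy.symm⟩)
  | succ n hn ih =>
    obtain ⟨z, hz, hzxy⟩ : ∃ z ∈ X, z ∉ ({x, y} : Set V) :=
      Set.exists_mem_notMem_of_ncard_lt_ncard (by rw [Set.ncard_pair hxy]; omega)
    obtain ⟨hzx, hzy⟩ : z ≠ x ∧ z ≠ y := not_or.1 hzxy
    refine .cons hx (hX hx hz hzx.symm)
      (ih (hX.subset Set.sdiff_subset) ⟨hz, hzx⟩ ⟨hy, hxy.symm⟩ hzy ?_ hfin.sdiff)
    rw [Set.ncard_sdiff_singleton_of_mem hx]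
    omega

theorem HasConsecCycles.mono (h : HasConsecCycles G n) (hk : k ≤ n) : HasConsecCycles G k :=
  let ⟨m, hm⟩ := h; ⟨m, fun i hi => hm i (hi.trans_le hk)⟩

/-- `Ear G H T n`: a path of length `n` inside `H` whose ends have distinct neighbours in `T`. -/
def Ear (G : SimpleGraph V) (H T : Set V) (n : ℕ) : Prop :=
  ∃ u v, ∃ x ∈ T, ∃ y ∈ T, x ≠ y ∧ G.Adj u x ∧ G.Adj v y ∧ PathIn G H u v n

namespace Ear

theorem hasCycleLength (h : Ear G H X l) (hX : G.IsClique X) (hd : Disjoint H X) (hn : 1 ≤ n)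
    (hnX : n < X.ncard) : HasCycleLength G (l + n + 2) := by
  obtain ⟨u, v, x, hx, y, hy, hxy, hu, hv, p⟩ := h
  exact p.hasCycleLength (.of_isClique hX hx hy hxy hn hnX) hd hu hv (by omega)

theorem hasConsecCycles (h : Ear G H X l) (h' : Ear G H X (l + d)) (hX : G.IsClique X)
    (hH : Disjoint H X) (hd : d ≤ k) (hk : k < X.ncard) : HasConsecCycles G (k + d) := by
  refine ⟨l + 3, fun i hi => ?_⟩
  rcases lt_or_ge i k with hik | hki
  · rw [show l + 3 + i = l + (i + 1) + 2 by omega]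
    exact h.hasCycleLength hX hH (by omega) (by omega)
  · rw [show l + 3 + i = l + d + (i + 1 - d) + 2 by omega]
    exact h'.hasCycleLength hX hH (by omega) (by omega)

end Ear

theorem hasConsecCycles_of_isClique (h : KConnected G k) (hk : 2 ≤ k) (hX : G.IsClique X)
    (hXk : n < X.ncard) (hn : 1 ≤ n) (hw : w ∉ X) : HasConsecCycles G n := by
  let C := componentIn G Xᶜ w
  have hwC : w ∈ C := mem_componentIn_self hw
  have hCX : Disjoint C X := Set.disjoint_left.2 fun x hx => componentIn_subset hx
  obtain ⟨x, ⟨hx, c, hc, hcx⟩, y, ⟨hy, c', hc', hcy⟩, hxy⟩ :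
      {x ∈ X | ∃ c ∈ C, G.Adj c x}.Nontrivial := by
    have := h.finite
    by_contra hZ
    rw [Set.not_nontrivial_iff, ← Set.ncard_le_one_iff_subsingleton] at hZ
    obtain ⟨x, hx, hxZ⟩ := Set.exists_mem_notMem_of_ncard_lt_ncard
      (hZ.trans_lt (hn.trans_lt hXk))
    refine (h.mem_or_mem ⟨w, hwC⟩ (hZ.trans_lt hk) (fun u hu v hv ha => ?_) x).elim
      (fun hxC => componentIn_subset hxC hx) hxZ
    exact componentIn_closedIn u hu v (fun hvX => hv ⟨hvX, u, hu, ha⟩) ha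
  obtain ⟨m, p⟩ := connectedOn_componentIn.exists_pathIn hc hc'
  have hear : Ear G C X m := ⟨c, c', x, hx, y, hy, hxy, hcx, hcy, p⟩
  exact hear.hasConsecCycles (d := 0) hear hX hCX (Nat.zero_le n) hXk

/-- The vertices with a neighbour in `T`. -/
def attachedTo (G : SimpleGraph V) (T : Set V) : Set V :=
  {v | (G.neighborSet v ∩ T).Nonempty}

theorem mem_attachedTo_of_pos (h : 0 < (G.neighborSet u ∩ T).ncard) : u ∈ attachedTo G T :=
  Set.nonempty_of_ncard_ne_zero h.ne'

theorem ncard_eq_zero_of_notMem_attachedTo (h : u ∉ attachedTo G T) :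
    (G.neighborSet u ∩ T).ncard = 0 := by
  rw [Set.not_nonempty_iff_eq_empty.1 h, Set.ncard_empty]

theorem PathIn.ear (p : PathIn G H v w n) (hv : 2 ≤ (G.neighborSet v ∩ T).ncard)
    (hw : w ∈ attachedTo G T) : Ear G H T n := by
  obtain ⟨y, hwy, hy⟩ := hw
  obtain ⟨x, ⟨hvx, hx⟩, hxy⟩ := Set.exists_ne_of_one_lt_ncard hv y
  exact ⟨v, w, x, hx, y, hy, hxy, hvx, hwy, p⟩

theorem Link.ears {p q : V} (hK : K ⊆ H \ {p, q}) (hp : p ∈ H) (hq : q ∈ H)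
    (hpq : G.Adj p q) (hp₂ : 2 ≤ (G.neighborSet p ∩ T).ncard)
    (hq₂ : 2 ≤ (G.neighborSet q ∩ T).ncard)
    (hl : Link G K (attachedTo G {p, q}) (attachedTo G T) n) :
    Ear G H T (n + 1) ∧ Ear G H T (n + 2) := by
  obtain ⟨a, ⟨x, hax, hx⟩, b, hb, r⟩ := hl
  wlog hxp : x = p generalizing p q
  · exact this (Set.pair_comm p q ▸ hK) hq hp hpq.symm hq₂ hp₂ (Set.pair_comm p q ▸ hx)
      (hx.resolve_left hxp)
  subst hxp
  have r' : PathIn G ((H \ {q}) \ {x}) a b n :=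
    r.mono (hK.trans_eq (by rw [Set.sdiff_sdiff, Set.singleton_union, Set.pair_comm]))
  exact ⟨(PathIn.cons hp hax.symm (r'.mono (Set.sdiff_subset_sdiff_left Set.sdiff_subset))).ear
    hp₂ hb, (PathIn.cons hq hpq.symm (.cons ⟨hp, hpq.ne⟩ hax.symm r')).ear hq₂ hb⟩

/-- `H` is a component of the complement of a triangle `T` in a three-connected graph of minimum
degree at least four. -/
structure TriangleComponent (G : SimpleGraph V) (H T : Set V) : Prop where
  kConnected : KConnected G 3
  four_le : ∀ v, 4 ≤ (G.neighborSet v).ncard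
  isClique : G.IsClique T
  ncard_eq : T.ncard = 3
  connectedOn : ConnectedOn G H
  nonempty : H.Nonempty
  disjoint : Disjoint H T
  closedIn : ClosedIn G H Tᶜ

/-- The vertex `z` of `H` is adjacent to all of `T`, and its only neighbour in `H` is `a`. -/
def IsPendantAt (G : SimpleGraph V) (H T : Set V) (z a : V) : Prop :=
  z ∈ H ∧ T ⊆ G.neighborSet z ∧ G.neighborSet z ∩ H = {a}

theorem IsPendantAt.adj {a : V} (h : IsPendantAt G H T z a) : G.Adj z a :=
  (h.2.2.superset rfl).1

theorem IsPendantAt.mem {a : V} (h : IsPendantAt G H T z a) : a ∈ H :=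
  (h.2.2.superset rfl).2

theorem ncard_inter_le_componentIn_add_mark [Finite V] {a : V}
    (hR : (G.neighborSet x ∩ R).Subsingleton) (hx : x ∈ componentIn G (H \ R) a) :
    (G.neighborSet x ∩ H).ncard ≤
      (G.neighborSet x ∩ componentIn G (H \ R) a).ncard + mark (attachedTo G R) x :=
  have hcl {y : V} (hy : y ∈ H \ componentIn G (H \ R) a) (ha : G.Adj x y) : y ∈ R :=
    componentIn_closedIn.mem_of_adj hx hy ha
  ncard_neighborSet_inter_le_add_mark (hR.anti fun _ hy => ⟨hy.1, hcl hy.2 hy.1⟩)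
    fun y hy ha => ⟨y, ha, hcl hy ha⟩

namespace TriangleComponent

theorem nontrivial (h : TriangleComponent G H T) : T.Nontrivial := by
  have := h.kConnected.finite
  exact Set.one_lt_ncard_iff_nontrivial.1 (by rw [h.ncard_eq]; omega)

theorem exists_notMem (h : TriangleComponent G H T) : ∃ t, t ∉ H :=
  h.nontrivial.nonempty.imp fun _ ht => Set.disjoint_right.1 h.disjoint ht

theorem four_le_add (h : TriangleComponent G H T) (hu : u ∈ H) :
    4 ≤ (G.neighborSet u ∩ H).ncard + (G.neighborSet u ∩ T).ncard := by
  have := h.kConnected.finite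
  refine (h.four_le u).trans ((Set.ncard_le_ncard fun x hx => ?_).trans (Set.ncard_union_le _ _))
  by_cases hxT : x ∈ T
  exacts [.inr ⟨hx, hxT⟩, .inl ⟨hx, h.closedIn u hu x hxT hx⟩]

theorem exists_mem_attachedTo (h : TriangleComponent G H T) (hCH : C ⊆ H) (hC : C.Nonempty)
    (hZ : Z.ncard ≤ 2) (hZH : Z ⊆ H) (hcl : ClosedIn G C (H \ Z)) :
    ∃ c ∈ C, c ∈ attachedTo G T := by
  by_contra! hno
  obtain ⟨t, htH⟩ := h.exists_notMem
  refine (h.kConnected.mem_or_mem hC (Nat.lt_succ_of_le hZ) (fun u hu v hv ha => ?_) t).elim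
    (fun h => htH (hCH h)) fun h => htH (hZH h)
  have hvT : v ∉ T := fun hvT => hno u hu ⟨v, ha, hvT⟩
  exact hcl u hu v ⟨h.closedIn u (hCH hu) v hvT ha, hv⟩ ha

theorem isLinkable {A B : Set V} (h : TriangleComponent G H T) (hK : K ⊆ H)
    (hconn : ConnectedOn G K) (hA : (K ∩ A).Nonempty) (hB : (K ∩ B).Nonempty)
    (hdeg : ∀ s ∈ K, 3 ≤ markedDegree G K A B s)
    (hmark : ∀ s ∈ K, (s ∈ attachedTo G T ∨ ∃ x ∈ H \ K, G.Adj s x) → s ∈ A ∨ s ∈ B)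
    (he : e ∉ H) : IsLinkable G K A B e where
  connectedOn := hconn
  nonempty_left := hA
  nonempty_right := hB
  three_le s hs _ := hdeg s hs
  two_le heK := absurd (hK heK) he
  exists_ne := hA.imp fun s hs => ⟨hs.1, fun hse => he (hse ▸ hK hs.1)⟩
  anchored t ht := by
    have hH : Anchored G H ∅ (attachedTo G T) {t} := fun C hC hne hcl =>
      (h.exists_mem_attachedTo (hC.trans Set.sdiff_subset) hne (by simp)
        (Set.singleton_subset_iff.2 (hK ht)) hcl).imp fun c hc => hc.imp_right .inr
    exact hH.restrict hK fun s hs hs' => hmark s hs (hs'.resolve_left id)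

theorem isLinkable_componentIn (h : TriangleComponent G H T) (hR : R ⊆ H) (hne : R.Nonempty)
    (hR₂ : R.ncard ≤ 2) (hsub : ∀ x ∈ H \ R, (G.neighborSet x ∩ R).Subsingleton)
    (hdeg : ∀ x ∈ H \ R, 3 ≤ (G.neighborSet x ∩ H).ncard + mark (attachedTo G T) x)
    (hs : s ∈ H \ R) (he : e ∉ H) :
    IsLinkable G (componentIn G (H \ R) s) (attachedTo G R) (attachedTo G T) e := by
  have := h.kConnected.finite
  have hKR : componentIn G (H \ R) s ⊆ H \ R := componentIn_subset
  have hKne : (componentIn G (H \ R) s).Nonempty := ⟨s, mem_componentIn_self hs⟩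
  refine h.isLinkable (hKR.trans Set.sdiff_subset) connectedOn_componentIn ?_ ?_
    (fun x hx => ?_) (fun x hx => ?_) he
  · obtain ⟨r, hr, x, hx, ha⟩ := h.connectedOn.exists_adj
      (hne.mono (Set.subset_inter hR subset_rfl)) hKR componentIn_closedIn hKne
    exact ⟨x, hx, r, ha.symm, hr.2⟩
  · exact h.exists_mem_attachedTo (hKR.trans Set.sdiff_subset) hKne hR₂ hR componentIn_closedIn
  · exact (hdeg x (hKR hx)).trans
      (Nat.add_le_add_right (ncard_inter_le_componentIn_add_mark (hsub x (hKR hx)) hx) _)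
  · rintro (hxT | ⟨y, hy, ha⟩)
    exacts [.inr hxT, .inl ⟨y, ha, componentIn_closedIn.mem_of_adj hx hy ha⟩]

theorem three_le_add_mark (h : TriangleComponent G H T) (hx : x ∈ H)
    (hno : ∀ a, ¬ IsPendantAt G H T x a) :
    3 ≤ (G.neighborSet x ∩ H).ncard + mark (attachedTo G T) x := by
  have := h.kConnected.finite
  have hdeg := h.four_le_add hx
  have hT : (G.neighborSet x ∩ T).ncard ≤ 3 :=
    h.ncard_eq ▸ Set.ncard_le_ncard Set.inter_subset_right
  by_cases hxT : x ∈ attachedTo G T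
  · rw [mark_of_mem hxT]
    by_contra! hlt
    obtain ⟨a, ha⟩ : ∃ a, G.neighborSet x ∩ H = {a} := Set.ncard_eq_one.1 (by omega)
    have heq : G.neighborSet x ∩ T = T :=
      Set.eq_of_subset_of_ncard_le Set.inter_subset_right (by rw [h.ncard_eq]; omega)
    exact hno a ⟨hx, Set.inter_eq_right.1 heq, ha⟩
  · rw [ncard_eq_zero_of_notMem_attachedTo hxT] at hdeg
    omega

theorem hasConsecCycles_of_forall_le_one (h : TriangleComponent G H T)
    (hone : ∀ x ∈ H, (G.neighborSet x ∩ T).ncard ≤ 1) : HasConsecCycles G 4 := by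
  have := h.kConnected.finite
  obtain ⟨t, ht, t', ht', htt'⟩ := h.nontrivial
  have htH : t ∉ H := Set.disjoint_right.1 h.disjoint ht
  have hdeg : ∀ x ∈ H, 4 ≤ markedDegree G H (attachedTo G (T \ {t})) (attachedTo G {t}) x := by
    intro x hx
    have hT : (G.neighborSet x ∩ T).ncard ≤
        mark (attachedTo G (T \ {t}) ∪ attachedTo G {t}) x := by
      refine ncard_le_mark (Set.ncard_le_one_iff_subsingleton.1 (hone x hx)) fun ⟨y, hxy, hy⟩ => ?_
      by_cases hyt : y = t
      exacts [.inr ⟨y, hxy, hyt⟩, .inl ⟨y, hxy, hy, hyt⟩]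
    have := (h.four_le_add hx).trans (Nat.add_le_add_left (hT.trans mark_union_le) _)
    rwa [← add_assoc] at this
  have hatt : ∀ z ∈ T, ∃ c ∈ H, G.Adj c z := fun z hz => h.kConnected.exists_adj h.nonempty
    h.ncard_eq.le h.closedIn ⟨hz, Set.disjoint_right.1 h.disjoint hz⟩
  obtain ⟨c, hc, hct⟩ := hatt t ht
  obtain ⟨c', hc', hct'⟩ := hatt t' ht'
  have hlink : IsLinkable G H (attachedTo G (T \ {t})) (attachedTo G {t}) t := by
    refine h.isLinkable subset_rfl h.connectedOn ⟨c', hc', t', hct', ht', htt'.symm⟩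
      ⟨c, hc, t, hct, rfl⟩ (fun x hx => (Nat.le_succ 3).trans (hdeg x hx)) (fun x _ => ?_) htH
    rintro (⟨y, hxy, hy⟩ | ⟨y, hy, -⟩)
    · by_cases hyt : y = t
      exacts [.inr ⟨y, hxy, hyt⟩, .inl ⟨y, hxy, hy, hyt⟩]
    · exact absurd hy.1 hy.2
  have hear : ∀ n, Link G H (attachedTo G (T \ {t})) (attachedTo G {t}) n → Ear G H T n := by
    rintro n ⟨a, ⟨x, hax, hx, hxt⟩, b, ⟨y, hby, rfl⟩, p⟩
    exact ⟨a, b, x, hx, y, ht, hxt, hax, hby, p⟩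
  rcases hlink.hasCloseLinks with ⟨n, h₀, h₂⟩ | ⟨-, htH' | ⟨p, hp, q, -, -, hp₃, -⟩⟩
  · exact (hear _ h₀).hasConsecCycles (hear _ h₂) h.isClique h.disjoint le_rfl h.ncard_eq.ge
  · exact absurd htH' htH
  · exact absurd (hdeg p hp) (by omega)

theorem two_le_of_markedDegree_le (h : TriangleComponent G H T)
    (hx : x ∈ componentIn G (H \ {v}) s)
    (hx₃ : markedDegree G (componentIn G (H \ {v}) s) (attachedTo G {v}) (attachedTo G T) x ≤ 3) :
    2 ≤ (G.neighborSet x ∩ T).ncard := by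
  have := h.kConnected.finite
  have hdeg := h.four_le_add (componentIn_subset hx).1
  have hH := ncard_inter_le_componentIn_add_mark
    (Set.subsingleton_singleton.anti Set.inter_subset_right) hx
  unfold markedDegree at hx₃
  by_cases hxT : x ∈ attachedTo G T
  · rw [mark_of_mem hxT] at hx₃
    omega
  · rw [ncard_eq_zero_of_notMem_attachedTo hxT] at hdeg
    omega

theorem two_le_ncard_inter (h : TriangleComponent G H T)
    (hno : ∀ z a, ¬ IsPendantAt G H T z a) (hv : v ∈ H) : 2 ≤ (G.neighborSet v ∩ H).ncard := by
  have := h.three_le_add_mark hv (hno v)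
  have := mark_le_one (A := attachedTo G T) (s := v)
  omega

theorem hasConsecCycles_or_exists_adj (h : TriangleComponent G H T)
    (hno : ∀ z a, ¬ IsPendantAt G H T z a) (hv : v ∈ H)
    (hv₂ : 2 ≤ (G.neighborSet v ∩ T).ncard) :
    HasConsecCycles G 4 ∨ ∃ p ∈ H, ∃ q ∈ H, G.Adj p q ∧
      2 ≤ (G.neighborSet p ∩ T).ncard ∧ 2 ≤ (G.neighborSet q ∩ T).ncard := by
  have := h.kConnected.finite
  obtain ⟨t, htH⟩ := h.exists_notMem
  obtain ⟨s, ⟨hvs, hs⟩, hsv⟩ := Set.exists_ne_of_one_lt_ncard (h.two_le_ncard_inter hno hv) v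
  let K := componentIn G (H \ {v}) s
  have hKH : K ⊆ H \ {v} := componentIn_subset
  have hlink : IsLinkable G K (attachedTo G {v}) (attachedTo G T) t :=
    h.isLinkable_componentIn (Set.singleton_subset_iff.2 hv) (Set.singleton_nonempty v) (by simp)
      (fun x _ => Set.subsingleton_singleton.anti Set.inter_subset_right)
      (fun x hx => h.three_le_add_mark hx.1 (hno x)) ⟨hs, hsv⟩ htH
  have hear : ∀ n, Link G K (attachedTo G {v}) (attachedTo G T) n → Ear G H T (n + 1) := by
    rintro n ⟨a, ⟨x, hax, rfl⟩, b, hb, p⟩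
    exact (PathIn.cons hv hax.symm (p.mono hKH)).ear hv₂ hb
  rcases hlink.hasCloseLinks with ⟨n, h₀, h₂⟩ | ⟨-, htK | ⟨p, hp, q, hq, hpq, hp₃, hq₃, -⟩⟩
  · refine .inl ((hear _ h₀).hasConsecCycles (k := 2) (d := 2) ?_ h.isClique h.disjoint le_rfl
      h.ncard_eq.ge)
    exact add_right_comm n 1 2 ▸ hear _ h₂
  · exact absurd (hKH htK).1 htH
  · exact .inr ⟨p, (hKH hp).1, q, (hKH hq).1, hpq, h.two_le_of_markedDegree_le hp hp₃,
      h.two_le_of_markedDegree_le hq hq₃⟩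

theorem hasConsecCycles_of_adj {p q : V} (h : TriangleComponent G H T)
    (hno : ∀ z a, ¬ IsPendantAt G H T z a) (hp : p ∈ H) (hq : q ∈ H) (hpq : G.Adj p q)
    (hp₂ : 2 ≤ (G.neighborSet p ∩ T).ncard) (hq₂ : 2 ≤ (G.neighborSet q ∩ T).ncard) :
    HasConsecCycles G 4 := by
  have hcycles {l : ℕ} (h₀ : Ear G H T l) (h₂ : Ear G H T (l + 2)) : HasConsecCycles G 4 :=
    h₀.hasConsecCycles h₂ h.isClique h.disjoint le_rfl h.ncard_eq.ge
  by_cases hcom : ∃ s ∈ H, G.Adj s p ∧ G.Adj s q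
  · obtain ⟨s, hs, hsp, hsq⟩ := hcom
    have path : PathIn G H p q 2 :=
      .cons hp hsp.symm (.cons ⟨hs, hsp.ne⟩ hsq (.nil ⟨⟨hq, hpq.ne'⟩, hsq.ne'⟩))
    exact hcycles ((PathIn.nil hp).ear hp₂ (mem_attachedTo_of_pos (by omega)))
      (path.ear hp₂ (mem_attachedTo_of_pos (by omega)))
  have := h.kConnected.finite
  push Not at hcom
  obtain ⟨t, htH⟩ := h.exists_notMem
  obtain ⟨s, ⟨hps, hs⟩, hsq⟩ := Set.exists_ne_of_one_lt_ncard (h.two_le_ncard_inter hno hp) q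
  have hlink := h.isLinkable_componentIn (R := {p, q}) (s := s) (Set.pair_subset hp hq)
    (Set.insert_nonempty _ _) (Set.ncard_pair hpq.ne).le ?_
    (fun x hx => h.three_le_add_mark hx.1 (hno x))
    ⟨hs, not_or.2 ⟨(G.ne_of_adj hps).symm, hsq⟩⟩ htH
  · obtain ⟨d, hd, n, h₀, h₁⟩ := hlink.exists_linksApart
    have hears {m : ℕ} := Link.ears (n := m) (K := componentIn G (H \ {p, q}) s)
      componentIn_subset hp hq hpq hp₂ hq₂
    refine hcycles (hears h₀).1 ?_
    rcases hd with rfl | rfl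
    exacts [(hears h₁).2, add_right_comm n 2 1 ▸ (hears h₁).1]
  · rintro x hx y ⟨hy, rfl | rfl⟩ z ⟨hz, rfl | rfl⟩
    exacts [rfl, absurd hz (hcom x hx.1 hy), absurd hy (hcom x hx.1 hz), rfl]

theorem hasConsecCycles_of_forall_not_isPendantAt (h : TriangleComponent G H T)
    (hno : ∀ z a, ¬ IsPendantAt G H T z a) : HasConsecCycles G 4 := by
  by_cases hone : ∀ x ∈ H, (G.neighborSet x ∩ T).ncard ≤ 1
  · exact h.hasConsecCycles_of_forall_le_one hone
  push Not at hone
  obtain ⟨v, hv, hv₂⟩ := hone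
  rcases h.hasConsecCycles_or_exists_adj hno hv hv₂ with hG | ⟨p, hp, q, hq, hpq, hp₂, hq₂⟩
  exacts [hG, h.hasConsecCycles_of_adj hno hp hq hpq hp₂ hq₂]

theorem isClique_insert {a : V} (h : TriangleComponent G H T) (hz : IsPendantAt G H T z a) :
    G.IsClique (insert z T) :=
  h.isClique.insert fun _ hx _ => hz.2.1 hx

theorem ncard_insert (h : TriangleComponent G H T) (hz : z ∈ H) : (insert z T).ncard = 4 := by
  have := h.kConnected.finite
  rw [Set.ncard_insert_of_notMem (Set.disjoint_left.1 h.disjoint hz), h.ncard_eq]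

theorem disjoint_insert (h : TriangleComponent G H T) : Disjoint (H \ {z}) (insert z T) := by
  rw [Set.insert_eq, Set.disjoint_union_right]
  exact ⟨Set.disjoint_sdiff_left, h.disjoint.mono_left Set.sdiff_subset⟩

theorem ear_of_link {a : V} (h : TriangleComponent G H T) (hz : IsPendantAt G H T z a)
    (hK : K ⊆ H \ {z}) (hl : Link G K (attachedTo G {z}) (attachedTo G T) n) :
    Ear G (H \ {z}) (insert z T) n := by
  obtain ⟨x, ⟨r, hxr, hrz⟩, b, ⟨y, hby, hy⟩, p⟩ := hl
  have hzy : z ≠ y := fun hzy => Set.disjoint_left.1 h.disjoint hz.1 (hzy ▸ hy)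
  exact ⟨x, b, z, .inl rfl, y, .inr hy, hzy, Set.mem_singleton_iff.1 hrz ▸ hxr, hby, p.mono hK⟩

theorem hasConsecCycles_of_unique_isPendantAt {a : V} (h : TriangleComponent G H T)
    (hz : IsPendantAt G H T z a) (huniq : ∀ x ∈ H \ {z}, ∀ b, ¬ IsPendantAt G H T x b) :
    HasConsecCycles G 4 := by
  have := h.kConnected.finite
  obtain ⟨t, htH⟩ := h.exists_notMem
  have hlink := h.isLinkable_componentIn (Set.singleton_subset_iff.2 hz.1)
    (Set.singleton_nonempty z) (by simp)
    (fun x _ => Set.subsingleton_singleton.anti Set.inter_subset_right)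
    (fun x hx => h.three_le_add_mark hx.1 (huniq x hx)) ⟨hz.mem, hz.adj.ne'⟩ htH
  obtain ⟨d, hd, n, h₀, h₁⟩ := hlink.exists_linksApart
  have hcycles : HasConsecCycles G (3 + d) :=
    (h.ear_of_link hz componentIn_subset h₀).hasConsecCycles
      (h.ear_of_link hz componentIn_subset h₁) (h.isClique_insert hz) h.disjoint_insert
      (by omega) (h.ncard_insert hz.1).ge
  exact hcycles.mono (by omega)

theorem hasConsecCycles_of_adj_isPendantAt (h : TriangleComponent G H T)
    (hcard : 6 ≤ Nat.card V) {a b : V} (hz : IsPendantAt G H T z a) (hw : IsPendantAt G H T w b)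
    (hzw : G.Adj z w) : HasConsecCycles G 4 := by
  have := h.kConnected.finite
  have hclique : G.IsClique (insert w (insert z T)) := by
    refine (h.isClique_insert hz).insert fun x hx _ => ?_
    rcases hx with rfl | hx
    exacts [hzw.symm, hw.2.1 hx]
  have hncard : (insert w (insert z T)).ncard = 5 := by
    rw [Set.ncard_insert_of_notMem, h.ncard_insert hz.1]
    rintro (rfl | hwT)
    exacts [hzw.ne rfl, Set.disjoint_left.1 h.disjoint hw.1 hwT]
  obtain ⟨x, hx⟩ : ∃ x, x ∉ insert w (insert z T) := by
    by_contra! hall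
    rw [Set.eq_univ_of_forall hall, Set.ncard_univ] at hncard
    omega
  exact hasConsecCycles_of_isClique h.kConnected (by omega) hclique hncard.ge (by omega) hx

theorem hasConsecCycles_of_not_adj_isPendantAt (h : TriangleComponent G H T) {a b : V}
    (hz : IsPendantAt G H T z a) (hw : IsPendantAt G H T w b) (hne : w ≠ z)
    (hzw : ¬ G.Adj z w) : HasConsecCycles G 4 := by
  have hnotMem {x : V} (hx : x ∈ H) : x ∉ T := Set.disjoint_left.1 h.disjoint hx
  have ha : a ∈ H \ {z, w} := ⟨hz.mem, not_or.2 ⟨hz.adj.ne', fun haw => hzw (haw ▸ hz.adj)⟩⟩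
  let K := componentIn G (H \ {z, w}) a
  have hK : K ⊆ H \ {z, w} := componentIn_subset
  obtain ⟨c, ⟨n, p⟩, x, hcx, hx⟩ := h.exists_mem_attachedTo (hK.trans Set.sdiff_subset)
    ⟨a, mem_componentIn_self ha⟩ (Set.ncard_pair hne.symm).le (Set.pair_subset hz.1 hw.1)
    componentIn_closedIn
  have hzT : Disjoint (H \ {z, w}) (insert z (insert w T)) := by
    rw [Set.disjoint_left]
    rintro y hy (rfl | rfl | hyT)
    exacts [hy.2 (.inl rfl), hy.2 (.inr rfl), hnotMem hy.1 hyT]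
  obtain ⟨y, hy, hyx⟩ := h.nontrivial.exists_ne x
  have hpath : ∀ j, 1 ≤ j → j ≤ 4 → PathIn G (insert z (insert w T)) z x j := by
    intro j hj hj₄
    rcases hj₄.lt_or_eq with hj₄ | rfl
    · refine (PathIn.of_isClique (h.isClique_insert hz) (.inl rfl) (.inr hx)
        (fun hzx => hnotMem hz.1 (hzx ▸ hx)) hj (h.ncard_insert hz.1 ▸ hj₄)).mono ?_
      exact Set.insert_subset_insert (Set.subset_insert w T)
    · have q : PathIn G (insert w T) y x 3 := .of_isClique (h.isClique_insert hw) (.inr hy)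
        (.inr hx) hyx (by omega) (h.ncard_insert hw.1).ge
      refine .cons (.inl rfl) (hz.2.1 hy) (q.mono fun u hu => ⟨.inr hu, ?_⟩)
      rintro rfl
      exact hu.elim (fun huw => hne huw.symm) (hnotMem hz.1)
  refine ⟨n + 1 + 2, fun i hi => ?_⟩
  rw [show n + 1 + 2 + i = n + (i + 1) + 2 by omega]
  exact p.hasCycleLength (hpath _ (by omega) (by omega)) hzT hz.adj.symm hcx (by omega)

theorem hasConsecCycles (h : TriangleComponent G H T) (hcard : 6 ≤ Nat.card V) :
    HasConsecCycles G 4 := by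
  by_cases hno : ∀ z a, ¬ IsPendantAt G H T z a
  · exact h.hasConsecCycles_of_forall_not_isPendantAt hno
  push Not at hno
  obtain ⟨z, a, hz⟩ := hno
  by_cases huniq : ∀ x ∈ H \ {z}, ∀ b, ¬ IsPendantAt G H T x b
  · exact h.hasConsecCycles_of_unique_isPendantAt hz huniq
  push Not at huniq
  obtain ⟨w, ⟨-, hwz⟩, b, hw⟩ := huniq
  by_cases hzw : G.Adj z w
  exacts [h.hasConsecCycles_of_adj_isPendantAt hcard hz hw hzw,
    h.hasConsecCycles_of_not_adj_isPendantAt hz hw hwz hzw]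

end TriangleComponent

theorem hasConsecCycles_of_triangle (h₃ : KConnected G 3)
    (hdeg : ∀ v, 4 ≤ (G.neighborSet v).ncard) (hcard : 6 ≤ Nat.card V) (hT : G.IsClique T)
    (hT₃ : T.ncard = 3) : HasConsecCycles G 4 := by
  obtain ⟨v, hv⟩ : ∃ v, v ∉ T := by
    by_contra! hall
    rw [Set.eq_univ_of_forall hall, Set.ncard_univ] at hT₃
    omega
  have h : TriangleComponent G (componentIn G Tᶜ v) T :=
    { kConnected := h₃
      four_le := hdeg
      isClique := hT
      ncard_eq := hT₃
      connectedOn := connectedOn_componentIn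
      nonempty := ⟨v, mem_componentIn_self hv⟩
      disjoint := Set.disjoint_left.2 fun _ hx => componentIn_subset hx
      closedIn := componentIn_closedIn }
  exact h.hasConsecCycles hcard

end

/-! ### Bipartite sets and odd cycles -/

section

variable {V : Type*} {G : SimpleGraph V} {A B F S T X Z : Set V} {u v w x y z : V} {n : ℕ}

/-- `A` contains the vertices of one colour in a proper two-colouring of the subgraph induced by
`X`. -/
def IsColorClassOn (G : SimpleGraph V) (X A : Set V) : Prop :=
  ∀ u ∈ X, ∀ v ∈ X, G.Adj u v → (u ∈ A ↔ v ∉ A)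

/-- The subgraph induced by `X` is bipartite. The colour class need not lie in `X`, so that
colourings of different induced subgraphs can be compared. -/
def BipartiteOn (G : SimpleGraph V) (X : Set V) : Prop :=
  ∃ A, IsColorClassOn G X A

namespace IsColorClassOn

theorem mono (h : IsColorClassOn G X A) (hT : T ⊆ X) : IsColorClassOn G T A :=
  fun u hu v hv ha => h u (hT hu) v (hT hv) ha

theorem mem_iff_mem_iff_even (h : IsColorClassOn G S A) (p : PathIn G S u v n) :
    (u ∈ A ↔ v ∈ A) ↔ Even n := by
  induction p with
  | nil _ => simp
  | @cons S u x w k hu ha p ih =>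
    have hxw : (x ∈ A ↔ w ∈ A) ↔ Even k := ih (h.mono Set.sdiff_subset)
    have hux : u ∈ A ↔ x ∉ A := h u hu x p.left_mem.1 ha
    rw [Nat.even_add_one, ← hxw]
    tauto

theorem mem_iff_of_connectedOn (hA : IsColorClassOn G S A) (hB : IsColorClassOn G S B)
    (hS : ConnectedOn G S) (hx : x ∈ S) (hAB : x ∈ A ↔ x ∈ B) (hy : y ∈ S) : y ∈ A ↔ y ∈ B := by
  obtain ⟨n, p⟩ := hS.exists_pathIn hx hy
  have : (x ∈ A ↔ y ∈ A) ↔ (x ∈ B ↔ y ∈ B) :=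
    (hA.mem_iff_mem_iff_even p).trans (hB.mem_iff_mem_iff_even p).symm
  tauto

theorem mem_iff_of_adj (hA : IsColorClassOn G (F \ {x}) A) (hB : IsColorClassOn G (F \ {y}) B)
    (hS : ConnectedOn G S) (hxS : S ⊆ F \ {x}) (hyS : S ⊆ F \ {y}) (hv : v ∈ S)
    (hAB : v ∈ A ↔ v ∈ B) (hz : z ∈ F) (hzx : z ≠ x) (hzy : z ≠ y) (ha : ∃ s ∈ S, G.Adj z s) :
    z ∈ A ↔ z ∈ B := by
  obtain ⟨s, hs, hzs⟩ := ha
  rw [hA z ⟨hz, hzx⟩ s (hxS hs) hzs, hB z ⟨hz, hzy⟩ s (hyS hs) hzs,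
    (hA.mono hxS).mem_iff_of_connectedOn (hB.mono hyS) hS hv hAB hs]

theorem compl (h : IsColorClassOn G X A) : IsColorClassOn G X Aᶜ :=
  fun u hu v hv ha => not_congr (h u hu v hv ha)

end IsColorClassOn

namespace PathIn

theorem not_bipartiteOn (p : PathIn G X u v n) (hn : Even n) (h : G.Adj u v) :
    ¬ BipartiteOn G X := fun ⟨A, hA⟩ => by
  have huv : u ∈ A ↔ v ∈ A := (hA.mem_iff_mem_iff_even p).2 hn
  have hne : u ∈ A ↔ v ∉ A := hA u p.left_mem v p.right_mem h
  tauto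

theorem not_bipartiteOn_of_odd (p : PathIn G X u v n) (hn : Odd n) (hw : w ∈ X)
    (hu : G.Adj w u) (hv : G.Adj w v) : ¬ BipartiteOn G X := fun ⟨A, hA⟩ => by
  have hwu : w ∈ A ↔ u ∉ A := hA w hw u p.left_mem hu
  have hwv : w ∈ A ↔ v ∉ A := hA w hw v p.right_mem hv
  have huv : ¬ (u ∈ A ↔ v ∈ A) := mt (hA.mem_iff_mem_iff_even p).1 (Nat.not_even_iff_odd.2 hn)
  tauto

theorem not_bipartiteOn_of_even (p : PathIn G X u v n) (hn : Even n) (hx : x ∈ X) (hy : y ∈ X)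
    (hxy : G.Adj x y) (hu : G.Adj x u) (hv : G.Adj y v) : ¬ BipartiteOn G X := fun ⟨A, hA⟩ => by
  have hxy' : x ∈ A ↔ y ∉ A := hA x hx y hy hxy
  have hxu : x ∈ A ↔ u ∉ A := hA x hx u p.left_mem hu
  have hyv : y ∈ A ↔ v ∉ A := hA y hy v p.right_mem hv
  have huv : u ∈ A ↔ v ∈ A := (hA.mem_iff_mem_iff_even p).2 hn
  tauto

end PathIn

namespace BipartiteOn

theorem mono (h : BipartiteOn G X) (hT : T ⊆ X) : BipartiteOn G T :=
  let ⟨A, hA⟩ := h; ⟨A, hA.mono hT⟩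

theorem of_colorable (h : (G.induce X).Colorable 2) : BipartiteOn G X := by
  obtain ⟨C⟩ := h
  refine ⟨(↑) '' {v : X | C v = 0}, fun u hu v hv ha => ?_⟩
  have hC : C ⟨u, hu⟩ ≠ C ⟨v, hv⟩ := C.valid ha
  simp only [Set.mem_image, Set.mem_ofPred_eq, Subtype.exists, exists_and_right, exists_eq_right,
    hu, hv, exists_true_left]
  omega

theorem colorable (h : BipartiteOn G Set.univ) : G.Colorable 2 := by
  classical
  obtain ⟨A, hA⟩ := h
  refine (Coloring.mk (fun v => decide (v ∈ A)) fun {u v} ha => ?_).colorable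
  have := hA u trivial v trivial ha
  grind

theorem exists_mem (h : BipartiteOn G X) (x : V) : ∃ A, IsColorClassOn G X A ∧ x ∈ A := by
  obtain ⟨A, hA⟩ := h
  by_cases hx : x ∈ A
  exacts [⟨A, hA, hx⟩, ⟨Aᶜ, hA.compl, hx⟩]

theorem of_three (hS : ConnectedOn G S) (hne : S.Nonempty) (hSF : S ⊆ F) (hZ : 3 ≤ Z.ncard)
    (hZF : Z ⊆ F \ S) (hadj : ∀ z ∈ Z, ∃ s ∈ S, G.Adj z s)
    (hdel : ∀ z ∈ Z, BipartiteOn G (F \ {z})) : BipartiteOn G F := by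
  have hsub {z : V} (hz : z ∈ Z) : S ⊆ F \ {z} := Set.subset_sdiff_singleton hSF (hZF hz).2
  obtain ⟨x, y, z, hx, hy, hz, hxy, hxz, hyz⟩ :=
    (Set.two_lt_ncard_iff (Set.finite_of_ncard_pos (by omega))).1 hZ
  obtain ⟨s, hs⟩ := hne
  choose A hA hsA using fun (z : V) (hz : z ∈ Z) => (hdel z hz).exists_mem s
  have hagree {a b c : V} (ha : a ∈ Z) (hb : b ∈ Z) (hc : c ∈ Z) (hca : c ≠ a) (hcb : c ≠ b) :
      c ∈ A a ha ↔ c ∈ A b hb :=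
    (hA a ha).mem_iff_of_adj (hA b hb) hS (hsub ha) (hsub hb) hs (iff_of_true (hsA a ha) (hsA b hb))
      (hZF hc).1 hca hcb (hadj c hc)
  have hatx := hagree hy hz hx hxy hxz
  have haty := hagree hx hz hy hxy.symm hyz
  have hatz := hagree hx hy hz hxz.symm hyz.symm
  -- The majority vote of the three colourings is proper, as at each of `x`, `y`, `z` the two
  -- colourings that remain valid there agree.
  refine ⟨{v | (v ∈ A x hx ∧ v ∈ A y hy) ∨ (v ∈ A x hx ∧ v ∈ A z hz) ∨ (v ∈ A y hy ∧ v ∈ A z hz)},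
    fun u hu v hv ha => ?_⟩
  have := ha.ne
  have hproper {z : V} (hz : z ∈ Z) (hu' : u ≠ z) (hv' : v ≠ z) : u ∈ A z hz ↔ v ∉ A z hz :=
    hA z hz u ⟨hu, hu'⟩ v ⟨hv, hv'⟩ ha
  have hxuv := hproper hx
  have hyuv := hproper hy
  have hzuv := hproper hz
  clear hproper hagree
  simp only [Set.mem_ofPred_eq]
  grind

end BipartiteOn

end

section

variable {V : Type*} {G : SimpleGraph V} {X : Set V} {c : ℤ → V} {g : ℕ → V}
  {d k l n s : ℕ} {i j : ℤ}

/-- `c` runs periodically through the vertices of a closed walk of length `n` in `G`. -/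
structure IsClosedWalk (G : SimpleGraph V) (c : ℤ → V) (n : ℕ) : Prop where
  periodic : Function.Periodic c n
  adj : ∀ i, G.Adj (c i) (c (i + 1))

theorem exists_isClosedWalk (hg : ∀ k < n, G.Adj (g k) (g (k + 1))) (hn : G.Adj (g n) (g 0)) :
    ∃ c, IsClosedWalk G c (n + 1) ∧ ∀ i, ∃ k ≤ n, c i = g k := by
  have hrem (i : ℤ) : ∃ k : ℕ, k ≤ n ∧ i % (n + 1 : ℕ) = k :=
    ⟨(i % (n + 1 : ℕ)).toNat, by have := Int.emod_lt_of_pos i (b := (n + 1 : ℕ)) (by omega); omega,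
      (Int.toNat_of_nonneg (Int.emod_nonneg i (by omega))).symm⟩
  refine ⟨fun i => g (i % (n + 1 : ℕ)).toNat, ⟨fun i => by simp only [Int.add_emod_right],
    fun i => ?_⟩, fun i => ?_⟩ <;> obtain ⟨k, hk, hik⟩ := hrem i
  · have hsucc : (i + 1) % (n + 1 : ℕ) = (k + 1 : ℕ) % (n + 1 : ℕ) := by
      rw [← Int.emod_add_emod, hik, Nat.cast_succ k]
    simp only [hsucc, hik, ← Int.natCast_emod, Int.toNat_natCast]
    obtain rfl | hlt := hk.eq_or_lt
    · rwa [Nat.mod_self]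
    · rw [Nat.mod_eq_of_lt (by omega)]
      exact hg k hlt
  · exact ⟨k, hk, by simp only [hik, Int.toNat_natCast]⟩

theorem IsClosedWalk.apply_add_add (hc : IsClosedWalk G c n) (hkl : k + l = n) (i : ℤ) :
    c (i + k + l) = c i := by
  rw [← hc.periodic i, ← hkl, Nat.cast_add, add_assoc]

/-- `c` runs periodically through the vertices of an induced cycle of length `2 * s + 1` in `G`. -/
structure IsInducedOddCycle (G : SimpleGraph V) (c : ℤ → V) (s : ℕ) : Prop
    extends IsClosedWalk G c (2 * s + 1) where
  eq_zero : ∀ i, ∀ d < 2 * s + 1, c (i + d) = c i → d = 0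
  chordless : ∀ i, ∀ d < 2 * s + 1, G.Adj (c i) (c (i + d)) → d = 1 ∨ d = 2 * s

theorem IsClosedWalk.isInducedOddCycle (hc : IsClosedWalk G c (2 * s + 1))
    (hmin : ∀ i, ∀ d : ℕ, Even d → G.Adj (c (i + d)) (c i) → 2 * s ≤ d) :
    IsInducedOddCycle G c s where
  toIsClosedWalk := hc
  eq_zero i d hd heq := by
    have hodd (i : ℤ) (d : ℕ) (hd : Odd d) (heq : c (i + d) = c i) : 2 * s + 1 ≤ d := by
      obtain ⟨k, rfl⟩ := hd
      have hadj : G.Adj (c (i + (2 * k : ℕ))) (c i) := by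
        have := hc.adj (i + (2 * k : ℕ))
        rwa [add_assoc, ← Int.natCast_add_one, heq] at this
      have := hmin i (2 * k) (even_two_mul k) hadj
      omega
    rcases Nat.even_or_odd d with heven | hd'
    · have := hodd (i + d) (2 * s + 1 - d) (by grind)
        ((hc.apply_add_add (by omega) i).trans heq.symm)
      omega
    · exact absurd (hodd i d hd' heq) (by omega)
  chordless i d hd hadj := by
    rcases Nat.even_or_odd d with heven | hodd
    · have := hmin i d heven hadj.symm
      omega
    · have hadj' : G.Adj (c (i + d + (2 * s + 1 - d : ℕ))) (c (i + d)) := by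
        rwa [hc.apply_add_add (by omega)]
      have := hmin _ _ (by grind) hadj'
      grind

theorem exists_isInducedOddCycle (hX : ¬ BipartiteOn G X) :
    ∃ c s, (∀ i, c i ∈ X) ∧ IsInducedOddCycle G c s := by
  classical
  have hex : ∃ s c, (∀ i, c i ∈ X) ∧ IsClosedWalk G c (2 * s + 1) := by
    have hodd := mt BipartiteOn.of_colorable hX
    rw [two_colorable_iff_forall_loop_even] at hodd
    push Not at hodd
    obtain ⟨u, w, hw⟩ := hodd
    obtain ⟨s, hs⟩ := Nat.not_even_iff_odd.1 hw
    have hadj {k : ℕ} (hk : k < 2 * s + 1) : G.Adj (w.getVert k) (w.getVert (k + 1)) :=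
      w.adj_getVert_succ (hs ▸ hk)
    obtain ⟨c, hc, hcg⟩ := exists_isClosedWalk (g := fun k => (w.getVert k : V)) (n := 2 * s)
      (fun k hk => hadj (by omega)) (by
        simpa only [← hs, w.getVert_length, w.getVert_zero] using hadj (Nat.lt_succ_self (2 * s)))
    exact ⟨s, c, fun i => by obtain ⟨k, -, hk⟩ := hcg i; exact hk ▸ (w.getVert k).2, hc⟩
  obtain ⟨c, hcX, hc⟩ := Nat.find_spec hex
  refine ⟨c, Nat.find hex, hcX, hc.isInducedOddCycle fun i d ⟨m, hm⟩ hadj => ?_⟩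
  obtain ⟨c', hc', hcc'⟩ := exists_isClosedWalk (g := fun k => c (i + k)) (n := d)
    (fun k _ => by simpa [add_assoc] using hc.adj (i + k)) (by simpa using hadj)
  have := Nat.find_min' hex (m := m) ⟨c', fun j => by obtain ⟨k, -, hk⟩ := hcc' j; exact hk ▸ hcX _,
    by rwa [two_mul, ← hm]⟩
  omega

namespace IsInducedOddCycle

theorem eq_of_lt (h : IsInducedOddCycle G c s) (heq : c (i + k) = c (i + l)) (hk : k < 2 * s + 1)
    (hl : l < 2 * s + 1) : k = l := by
  wlog hkl : k ≤ l generalizing k l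
  · exact (this heq.symm hl hk (by omega)).symm
  have := h.eq_zero (i + k) (l - k) (by omega) (by rw [heq]; congr 1; omega)
  omega

theorem exists_eq_add (h : IsInducedOddCycle G c s) (i j : ℤ) :
    ∃ d < 2 * s + 1, c j = c (i + d) := by
  obtain ⟨j', hj', heq⟩ := h.periodic.exists_mem_Ico (by omega) j i
  rw [Set.mem_Ico] at hj'
  exact ⟨(j' - i).toNat, by omega, by rw [heq]; congr 1; omega⟩

theorem eq_or_eq_of_adj (h : IsInducedOddCycle G c s) (ha : G.Adj (c i) (c j)) :
    c j = c (i + 1) ∨ c j = c (i - 1) := by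
  obtain ⟨d, hd, heq⟩ := h.exists_eq_add i j
  rw [heq] at ha ⊢
  refine (h.chordless i d hd ha).imp (fun hd => by rw [hd, Nat.cast_one]) fun hd => ?_
  rw [hd, ← h.periodic (i - 1)]
  congr 1
  omega

theorem pathIn (h : IsInducedOddCycle G c s) (hd : d < 2 * s + 1)
    (hX : ∀ k ≤ d, c (i + k) ∈ X) : PathIn G X (c i) (c (i + d)) d := by
  induction d generalizing i X with
  | zero => simpa using PathIn.nil (by simpa using hX 0 le_rfl)
  | succ d ih =>
    have hshift (k : ℕ) : i + 1 + k = i + (k + 1 : ℕ) := by omega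
    have htail : PathIn G (X \ {c i}) (c (i + 1)) (c (i + 1 + d)) d :=
      ih (by omega) fun k hk => by
        rw [hshift]
        refine ⟨hX _ (by omega), fun heq => ?_⟩
        exact absurd (h.eq_zero i (k + 1) (by omega) heq) (by omega)
    exact hshift d ▸ htail.cons (by simpa using hX 0 (by omega)) (h.adj i)

end IsInducedOddCycle

end

/-! ### Largest connected sets with non-bipartite complement -/

section

variable {V : Type*} {G : SimpleGraph V} {H R Y : Set V} {c : ℤ → V} {x : V} {s : ℕ}

/-- `H` is a largest connected set whose complement does not induce a bipartite graph. -/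
structure IsExtremal (G : SimpleGraph V) (H : Set V) : Prop where
  connectedOn : ConnectedOn G H
  not_bipartiteOn : ¬ BipartiteOn G Hᶜ
  bipartiteOn_compl : ∀ K, ConnectedOn G K → H.ncard < K.ncard → BipartiteOn G Kᶜ

theorem exists_isExtremal [Finite V] (hG : ¬ G.Colorable 2) : ∃ H, IsExtremal G H := by
  obtain ⟨H, ⟨hH, hodd⟩, hmax⟩ := Set.exists_max_image {H | ConnectedOn G H ∧ ¬ BipartiteOn G Hᶜ}
    Set.ncard (Set.toFinite _) ⟨∅, .of_closedIn fun T hT _ _ => Set.subset_empty_iff.1 hT,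
      by simpa using mt BipartiteOn.colorable hG⟩
  refine ⟨H, hH, hodd, fun K hK hlt => ?_⟩
  by_contra hKodd
  exact absurd (hmax K ⟨hK, hKodd⟩) (by omega)

namespace IsExtremal

theorem nonempty (h : IsExtremal G H) (hdeg : ∀ v, 3 ≤ (G.neighborSet v).ncard) :
    H.Nonempty := by
  by_contra hempty
  rw [Set.not_nonempty_iff_eq_empty] at hempty
  subst hempty
  have hdel (x : V) : BipartiteOn G (Set.univ \ {x}) := by
    rw [← Set.compl_eq_univ_sdiff]
    exact h.bipartiteOn_compl {x} .singleton (by simp)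
  refine h.not_bipartiteOn ?_
  rw [Set.compl_empty]
  obtain ⟨v⟩ : Nonempty V := not_isEmpty_iff.1 fun _ =>
    h.not_bipartiteOn ⟨∅, fun u => isEmptyElim u⟩
  exact .of_three .singleton ⟨v, rfl⟩ (Set.subset_univ _) (hdeg v)
    (fun z hz => ⟨trivial, fun hzv => hz.ne' hzv⟩) (fun z hz => ⟨v, rfl, hz.symm⟩)
    fun z _ => hdel z

theorem bipartiteOn_exchange [Finite V] (h : IsExtremal G H) (hR : R ⊆ H)
    (hc : ConnectedOn G (H \ R)) (hY : Y ⊆ Hᶜ) (hadj : ∀ y ∈ Y, ∃ x ∈ H \ R, G.Adj y x)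
    (hlt : R.ncard < Y.ncard) : BipartiteOn G (R ∪ Hᶜ \ Y) := by
  have hcard : ((H \ R) ∪ Y).ncard = (H \ R).ncard + Y.ncard :=
    Set.ncard_union_eq (Set.disjoint_left.2 fun x hx hxY => hY hxY hx.1)
  have hsplit : (H \ R).ncard + R.ncard = H.ncard := Set.ncard_sdiff_add_ncard_of_subset hR
  refine (h.bipartiteOn_compl _ (hc.union hadj) (by omega)).mono ?_
  rintro x (hx | hx) (hx' | hx')
  exacts [hx'.2 hx, hY hx' (hR hx), hx.1 hx'.1, hx.2 hx']

theorem bipartiteOn_sdiff [Finite V] (h : IsExtremal G H) (hx : x ∉ H) (ha : ∃ y ∈ H, G.Adj x y) :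
    BipartiteOn G (Hᶜ \ {x}) := by
  have := h.bipartiteOn_exchange (Set.empty_subset H) (by rw [Set.sdiff_empty]; exact h.connectedOn)
    (Set.singleton_subset_iff.2 hx) (by simpa using ha) (by simp)
  rwa [Set.empty_union] at this

theorem exists_adj [Finite V] (h : IsExtremal G H) (h₃ : KConnected G 3)
    (hdeg : ∀ v, 3 ≤ (G.neighborSet v).ncard) (hx : x ∉ H) : ∃ y ∈ H, G.Adj x y := by
  by_contra hno
  have hxH : x ∈ Hᶜ \ attachedTo G H := ⟨hx, fun ⟨y, hxy, hy⟩ => hno ⟨y, hy, hxy⟩⟩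
  set C := componentIn G (Hᶜ \ attachedTo G H) x
  have hC : C ⊆ Hᶜ \ attachedTo G H := componentIn_subset
  set Z := (Hᶜ ∩ attachedTo G H) ∩ attachedTo G C
  have hclosed : ClosedIn G C Zᶜ := fun u hu v hv ha => by
    have hvH : v ∉ H := fun hvH => (hC hu).2 ⟨v, ha, hvH⟩
    exact componentIn_closedIn u hu v ⟨hvH, fun hv' => hv ⟨⟨hvH, hv'⟩, u, ha.symm, hu⟩⟩ ha
  have hZ : 3 ≤ Z.ncard := by
    by_contra hlt
    obtain ⟨y, hy⟩ := h.nonempty hdeg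
    rcases h₃.mem_or_mem ⟨x, mem_componentIn_self hxH⟩ (by omega) hclosed y with hyC | hyZ
    exacts [(hC hyC).1 hy, hyZ.1.1 hy]
  refine h.not_bipartiteOn (.of_three connectedOn_componentIn ⟨x, mem_componentIn_self hxH⟩
    (fun v hv => (hC hv).1) hZ (fun z hz => ⟨hz.1.1, fun hzC => (hC hzC).2 hz.1.2⟩)
    (fun z ⟨_, v, hzv, hv⟩ => ⟨v, hv, hzv⟩) fun z hz => ?_)
  obtain ⟨⟨hzH, v, hzv, hv⟩, -⟩ := hz
  exact h.bipartiteOn_sdiff hzH ⟨v, hv, hzv⟩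

theorem exists_range_eq [Finite V] (h : IsExtremal G H) (h₃ : KConnected G 3)
    (hdeg : ∀ v, 3 ≤ (G.neighborSet v).ncard) :
    ∃ c s, IsInducedOddCycle G c s ∧ Set.range c = Hᶜ := by
  obtain ⟨c, s, hcH, hc⟩ := exists_isInducedOddCycle h.not_bipartiteOn
  refine ⟨c, s, hc, (Set.range_subset_iff.2 hcH).antisymm fun x hx => ?_⟩
  by_contra hcx
  have p : PathIn G (Hᶜ \ {x}) (c 0) (c (0 + (2 * s : ℕ))) (2 * s) :=
    hc.pathIn (Nat.lt_succ_self _) fun k _ => ⟨hcH _, fun heq => hcx ⟨_, heq⟩⟩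
  have hclose : G.Adj (c 0) (c (0 + (2 * s : ℕ))) := by
    have := hc.adj (0 + (2 * s : ℕ))
    rw [add_assoc, ← Int.natCast_add_one, hc.periodic] at this
    exact this.symm
  exact p.not_bipartiteOn (even_two_mul s) hclose
    (h.bipartiteOn_sdiff hx (h.exists_adj h₃ hdeg hx))

end IsExtremal

/-- The configuration left once `G` is triangle-free: the vertices outside an extremal set `H`
form an induced odd cycle `c`. -/
structure OddCycleConfig (G : SimpleGraph V) (H : Set V) (c : ℤ → V) (s : ℕ) : Prop
    extends IsExtremal G H, IsInducedOddCycle G c s where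
  cliqueFree : G.CliqueFree 3
  kConnected : KConnected G 3
  four_le_ncard : ∀ v, 4 ≤ (G.neighborSet v).ncard
  range_eq : Set.range c = Hᶜ

theorem exists_oddCycleConfig (hfree : G.CliqueFree 3) (h₃ : KConnected G 3)
    (hdeg : ∀ v, 4 ≤ (G.neighborSet v).ncard) (hG : ¬ G.Colorable 2) :
    ∃ H c s, OddCycleConfig G H c s := by
  have := h₃.finite
  obtain ⟨H, hH⟩ := exists_isExtremal hG
  obtain ⟨c, s, hc, hrange⟩ := hH.exists_range_eq h₃ fun v => by have := hdeg v; omega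
  exact ⟨H, c, s, hH, hc, hfree, h₃, hdeg, hrange⟩

end

section

variable {V : Type*} {G : SimpleGraph V} {H : Set V} {c : ℤ → V} {s d n l : ℕ} {i j : ℤ}
  {v w x y z : V}

theorem not_adj_of_cliqueFree (h : G.CliqueFree 3) (hxy : G.Adj x y) (hxz : G.Adj x z) :
    ¬ G.Adj y z := fun hyz => by
  classical
  exact h _ (is3Clique_triple_iff.2 ⟨hxy, hxz, hyz⟩)

namespace OddCycleConfig

theorem notMem (h : OddCycleConfig G H c s) (i : ℤ) : c i ∉ H :=
  h.range_eq.subset (Set.mem_range_self i)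

theorem exists_eq (h : OddCycleConfig G H c s) (hx : x ∉ H) : ∃ i, c i = x :=
  h.range_eq.superset hx

theorem two_le (h : OddCycleConfig G H c s) : 2 ≤ s := by
  by_contra hs
  have h02 : G.Adj (c 0) (c (1 + 1)) ∨ G.Adj (c 0) (c 0) := by
    obtain rfl | rfl : s = 0 ∨ s = 1 := by omega
    · have hper := h.periodic 0
      have := h.adj 0
      simp_all
    · left
      have hper := h.periodic 0
      have := (h.adj 2).symm
      simp_all
  rcases h02 with h02 | h00
  · exact not_adj_of_cliqueFree h.cliqueFree (h.adj 0) h02 (by simpa using h.adj 1)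
  · exact G.irrefl h00

theorem hasCycleLength (h : OddCycleConfig G H c s)
    (hL : Link G H (G.neighborSet (c i)) (G.neighborSet (c (i + d))) l) (hd : 1 ≤ d) (hn : 1 ≤ n)
    (hdn : d + n = 2 * s + 1) : HasCycleLength G (l + d + 2) ∧ HasCycleLength G (l + n + 2) := by
  obtain ⟨u, hu, v, hv, p⟩ := hL
  refine ⟨p.hasCycleLength (h.pathIn (X := Hᶜ) (by omega) fun k _ => h.notMem _)
    disjoint_compl_right hu.symm hv.symm (by omega), ?_⟩
  exact p.symm.hasCycleLength (h.pathIn (X := Hᶜ) (by omega) fun k _ => h.notMem _)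
    disjoint_compl_right hv.symm ((h.apply_add_add hdn i).symm ▸ hu.symm) (by omega)

theorem hasConsecCycles_of_linksApart (h : OddCycleConfig G H c s)
    (hL : LinksApart G H (G.neighborSet (c i)) (G.neighborSet (c (i + s))) 2) :
    HasConsecCycles G 4 := by
  have hs := h.two_le
  obtain ⟨l, hL, hL'⟩ := hL
  obtain ⟨h₀, h₁⟩ := h.hasCycleLength hL (n := s + 1) (by omega) (by omega) (by omega)
  obtain ⟨h₂, h₃⟩ := h.hasCycleLength hL' (n := s + 1) (by omega) (by omega) (by omega)
  refine ⟨l + s + 2, fun k hk => ?_⟩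
  obtain hk | hk | hk | hk : l + s + 2 + k = l + s + 2 ∨ l + s + 2 + k = l + (s + 1) + 2 ∨
    l + s + 2 + k = l + 2 + s + 2 ∨ l + s + 2 + k = l + 2 + (s + 1) + 2 := by omega
  all_goals rw [hk]; assumption

theorem two_le_ncard_neighborSet_inter (h : OddCycleConfig G H c s) (i : ℤ) :
    2 ≤ (G.neighborSet (c i) ∩ H).ncard := by
  have := h.kConnected.finite
  have hsub : G.neighborSet (c i) \ H ⊆ {c (i + 1), c (i - 1)} := by
    rintro x ⟨hx, hxH⟩
    obtain ⟨j, rfl⟩ := h.exists_eq hxH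
    exact h.eq_or_eq_of_adj hx
  have hpair := (Set.ncard_le_ncard hsub).trans (Set.ncard_insert_le _ _)
  rw [Set.ncard_singleton] at hpair
  have hsplit := Set.ncard_inter_add_ncard_sdiff_eq_ncard (G.neighborSet (c i)) H
  have hdeg := h.four_le_ncard (c i)
  omega

theorem exists_adj_ne (h : OddCycleConfig G H c s) (i : ℤ) (v : V) :
    ∃ w ∈ H \ {v}, G.Adj (c i) w := by
  have := h.kConnected.finite
  obtain ⟨w, hw, hne⟩ := Set.exists_ne_of_one_lt_ncard (h.two_le_ncard_neighborSet_inter i) v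
  exact ⟨w, ⟨hw.2, hne⟩, hw.1⟩

theorem hasConsecCycles_of_adj_add_two (h : OddCycleConfig G H c s) (hv : v ∈ H)
    (hi : G.Adj v (c i)) (hi' : G.Adj v (c (i + 2))) : HasConsecCycles G 4 := by
  have hs := h.two_le
  obtain ⟨w, hw, ha⟩ := h.exists_adj_ne (i + (s + 1 : ℕ)) v
  obtain ⟨l, p⟩ := h.connectedOn.exists_pathIn hv hw.1
  have hshift : i + 2 + (s - 1 : ℕ) = i + (s + 1 : ℕ) := by omega
  obtain ⟨h₀, h₃⟩ := h.hasCycleLength (n := s + 2)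
    ⟨v, hi'.symm, w, by rw [hshift]; exact ha, p⟩ (by omega) (by omega) (by omega)
  obtain ⟨h₂, h₁⟩ := h.hasCycleLength (n := s) ⟨v, hi.symm, w, ha, p⟩
    (by omega) (by omega) (by omega)
  refine ⟨l + (s - 1) + 2, fun k hk => ?_⟩
  obtain hk | hk | hk | hk : l + (s - 1) + 2 + k = l + (s - 1) + 2 ∨
    l + (s - 1) + 2 + k = l + s + 2 ∨ l + (s - 1) + 2 + k = l + (s + 1) + 2 ∨
    l + (s - 1) + 2 + k = l + (s + 2) + 2 := by omega
  all_goals rw [hk]; assumption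

theorem even_of_adj_of_adj (h : OddCycleConfig G H c s) (hno : ¬ HasConsecCycles G 4) (hv : v ∈ H)
    (hc : ConnectedOn G (H \ {v})) (hi : G.Adj v (c i)) (hj : G.Adj v (c (i + d)))
    (hlt : d < 2 * s + 1) : Even d := by
  have := h.kConnected.finite
  by_contra hodd
  rw [Nat.not_even_iff_odd] at hodd
  have hd : d + 2 < 2 * s + 1 := by
    obtain ⟨k, rfl⟩ := hodd
    refine lt_of_le_of_ne (by omega) fun heq => hno (h.hasConsecCycles_of_adj_add_two hv hj ?_)
    rw [← h.periodic i] at hi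
    convert hi using 2
    omega
  have hinj {k : ℕ} (hk : k ≤ d + 2) (l : ℕ) (hl : l ≤ d + 2) : c (i + k) = c (i + l) → k = l :=
    fun heq => h.eq_of_lt heq (by omega) (by omega)
  refine PathIn.not_bipartiteOn_of_odd
    (h.pathIn (i := i) (X := {v} ∪ Hᶜ \ {c (i + (d + 1 : ℕ)), c (i + (d + 2 : ℕ))}) hlt
      fun k hk => .inr ⟨h.notMem _, ?_⟩) hodd (.inl rfl) hi hj
    (h.bipartiteOn_exchange (Set.singleton_subset_iff.2 hv) hc ?_ ?_ ?_)
  · rintro (heq | heq) <;> have := hinj (by omega) _ (by omega) heq <;> omega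
  · rintro x (rfl | rfl) <;> exact h.notMem _
  · rintro y (rfl | rfl) <;> exact h.exists_adj_ne _ v
  · rw [Set.ncard_pair fun heq => by have := hinj (by omega) _ (by omega) heq; omega]
    simp

theorem eq_of_adj_of_adj (h : OddCycleConfig G H c s) (hno : ¬ HasConsecCycles G 4) (hv : v ∈ H)
    (hc : ConnectedOn G (H \ {v})) (hi : G.Adj v (c i)) (hj : G.Adj v (c j)) : c i = c j := by
  have := h.kConnected.finite
  obtain ⟨d, hd, heq⟩ := h.exists_eq_add i j
  rw [heq] at hj ⊢
  by_contra hne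
  have heven : Even d := h.even_of_adj_of_adj hno hv hc hi hj hd
  have hd₀ : d ≠ 0 := by rintro rfl; simp at hne
  have hodd : Even (2 * s + 1 - d) := by
    refine h.even_of_adj_of_adj (i := i + d) hno hv hc hj ?_ (by omega)
    rw [← h.periodic i] at hi
    convert hi using 2
    omega
  rw [Nat.even_sub hd.le] at hodd
  exact Nat.not_even_two_mul_add_one s (hodd.2 heven)

end OddCycleConfig

end

/-! ### End blocks -/

section

variable {V : Type*} {G : SimpleGraph V} {A B D H K R S T : Set V} {b t u v x : V} {c : ℤ → V}
  {s : ℕ}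

theorem ClosedIn.anchored_of_adj (hK : ClosedIn G K (S \ R)) (hKS : K ⊆ S \ R)
    (hS : ConnectedOn G (S \ T)) (hR : ((S \ T) ∩ R).Nonempty)
    (hAB : ∀ r ∈ R, ∀ x ∈ K, G.Adj r x → x ∈ A ∨ x ∈ B) : Anchored G K A B T := by
  intro X hX hne hc
  obtain ⟨r, hr, x, hx, ha⟩ := hS.exists_adj hR
    (fun x hx => ⟨⟨(hKS (hX hx).1).1, (hX hx).2⟩, (hKS (hX hx).1).2⟩)
    (fun u hu v hv ha => hc u hu v ⟨hK u (hX hu).1 v ⟨hv.1.1, hv.2⟩ ha, hv.1.2⟩ ha) hne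
  exact ⟨x, hx, hAB r hr.2 x (hX hx).1 ha⟩

/-- `D` is an end block of the graph induced by a connected set `H`, without the vertex `b` at
which it is attached. If `H` has no cut vertex then `D` is `H` without an arbitrary vertex. -/
structure IsEndBlock (G : SimpleGraph V) (H : Set V) (b : V) (D : Set V) : Prop where
  mem : b ∈ H
  nonempty : D.Nonempty
  subset : D ⊆ H \ {b}
  closedIn : ClosedIn G D (H \ {b})
  connectedOn : ConnectedOn G D
  connectedOn_sdiff : ConnectedOn G (H \ D)
  connectedOn_sdiff_singleton : ∀ t ∈ D, ConnectedOn G (H \ {t})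

/-- `D` is nonempty and some vertex `b` separates it from another part of `H`. -/
structure IsLobe (G : SimpleGraph V) (H : Set V) (b : V) (D : Set V) : Prop where
  mem : b ∈ H
  nonempty : D.Nonempty
  ssubset : D ⊂ H \ {b}
  closedIn : ClosedIn G D (H \ {b})

theorem IsLobe.isEndBlock (h : IsLobe G H b D) (hH : ConnectedOn G H)
    (hmin : ∀ b' D', IsLobe G H b' D' → D' ⊆ D → D' = D) : IsEndBlock G H b D := by
  have hbD : b ∉ D := fun hb => (h.ssubset.1 hb).2 rfl
  have hcompl : ConnectedOn G (H \ D) :=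
    hH.sdiff .singleton (Set.singleton_subset_iff.2 h.mem) (Set.singleton_nonempty b)
      h.ssubset.1 h.closedIn
  have hconn : ConnectedOn G D := .of_closedIn fun T hT hne hc =>
    hmin b T ⟨h.mem, hne, hT.trans_ssubset h.ssubset, fun u hu v hv ha =>
      hc u hu v (h.closedIn u (hT hu) v hv ha) ha⟩ hT
  refine ⟨h.mem, h.nonempty, h.ssubset.1, h.closedIn, hconn, hcompl, fun t ht =>
    .of_forall_mem (v := b) fun T hT hne hc => ?_⟩
  by_contra hbT
  have hbt : b ∈ H \ {t} := ⟨h.mem, fun hbt => hbD ((Set.mem_singleton_iff.1 hbt) ▸ ht)⟩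
  have hdisj : Disjoint (H \ D) T := hcompl.disjoint_of_closedIn
    (Set.sdiff_subset_sdiff_right (Set.singleton_subset_iff.2 ht)) hc ⟨⟨h.mem, hbD⟩, hbT⟩
  have hTD : T = D := hmin t T ⟨(h.ssubset.1 ht).1, hne, ⟨hT, fun hle => hbT (hle hbt)⟩, hc⟩
    fun x hx => by_contra fun hxD => Set.disjoint_left.1 hdisj ⟨(hT hx).1, hxD⟩ hx
  exact (hT (hTD ▸ ht)).2 rfl

theorem ConnectedOn.exists_isEndBlock [Finite V] (hH : ConnectedOn G H) (hu : u ∈ H)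
    (hne : (H \ {u}).Nonempty) : ∃ b D, IsEndBlock G H b D ∧ (D = H \ {b} → b = u) := by
  by_cases hlobe : ∃ D b, IsLobe G H b D
  · obtain ⟨D, ⟨b, hD⟩, hmin⟩ := (Set.toFinite {D | ∃ b, IsLobe G H b D}).exists_minimal hlobe
    exact ⟨b, D, hD.isEndBlock hH fun b' D' h' hle => hle.antisymm (hmin ⟨b', h'⟩ hle),
      fun heq => absurd heq hD.ssubset.ne⟩
  · have hdel : ∀ t ∈ H, ConnectedOn G (H \ {t}) := fun t ht =>
      .of_closedIn fun T hT hTne hc => by_contra fun hneq =>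
        hlobe ⟨T, t, ht, hTne, hT.ssubset_of_ne hneq, hc⟩
    have hself : H \ (H \ {u}) = {u} := by
      rw [Set.sdiff_sdiff_right_self, Set.inter_singleton_of_mem hu]
    exact ⟨u, H \ {u}, ⟨hu, hne, subset_rfl, fun _ _ _ hv _ => hv, hdel u hu,
      by rw [hself]; exact .singleton, fun t ht => hdel t ht.1⟩, fun _ => rfl⟩

namespace IsEndBlock

theorem notMem (h : IsEndBlock G H b D) : b ∉ D := fun hb => (h.subset hb).2 rfl

theorem insert_subset (h : IsEndBlock G H b D) : insert b D ⊆ H :=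
  Set.insert_subset h.mem (h.subset.trans Set.sdiff_subset)

theorem mem_insert_of_adj (h : IsEndBlock G H b D) (hu : u ∈ D) (hv : v ∈ H) (ha : G.Adj u v) :
    v ∈ insert b D := by
  by_cases hvb : v = b
  exacts [.inl hvb, .inr (h.closedIn u hu v ⟨hv, hvb⟩ ha)]

theorem connectedOn_insert_sdiff (h : IsEndBlock G H b D) (hR : R ⊆ D)
    (hc : ConnectedOn G (H \ R)) : ConnectedOn G (insert b D \ R) := by
  have hbR : b ∉ R := fun hb => h.notMem (hR hb)
  have heq : (H \ R) \ (H \ insert b D) = insert b D \ R := by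
    rw [Set.sdiff_sdiff_comm, Set.sdiff_sdiff_cancel_left h.insert_subset]
  rw [← heq]
  refine hc.sdiff .singleton (Set.singleton_subset_iff.2 ⟨h.mem, hbR⟩) (Set.singleton_nonempty b)
    (fun x hx => ⟨⟨hx.1, fun hxR => hx.2 (.inr (hR hxR))⟩, fun hxb => hx.2 (.inl hxb)⟩) ?_
  rintro u hu v hv ha
  refine ⟨hv.1.1, ?_⟩
  rintro (rfl | hvD)
  exacts [hv.2 rfl, hu.2 (h.mem_insert_of_adj hvD hu.1 ha.symm)]

theorem connectedOn_insert_sdiff_singleton (h : IsEndBlock G H b D) (ht : t ∈ insert b D) :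
    ConnectedOn G (insert b D \ {t}) := by
  rcases ht with rfl | ht
  · rw [Set.insert_sdiff_self_of_notMem h.notMem]
    exact h.connectedOn
  · exact h.connectedOn_insert_sdiff (Set.singleton_subset_iff.2 ht)
      (h.connectedOn_sdiff_singleton t ht)

theorem subset_of_closedIn (h : IsEndBlock G H b D) (hR : R ⊆ D) (hT : T ⊆ H \ R)
    (hc : ClosedIn G T (H \ R)) (hb : b ∉ T) : T ⊆ D := fun x hx => by
  have hdisj : Disjoint (H \ D) T := h.connectedOn_sdiff.disjoint_of_closedIn
    (Set.sdiff_subset_sdiff_right hR) hc ⟨⟨h.mem, h.notMem⟩, hb⟩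
  exact by_contra fun hxD => Set.disjoint_left.1 hdisj ⟨(hT hx).1, hxD⟩ hx

theorem exists_adj (h : IsEndBlock G H b D) (hH : ConnectedOn G H) : ∃ x ∈ D, G.Adj b x := by
  obtain ⟨r, ⟨-, rfl⟩, x, hx, ha⟩ :=
    hH.exists_adj ⟨b, h.mem, Set.mem_singleton b⟩ h.subset h.closedIn h.nonempty
  exact ⟨x, hx, ha⟩

end IsEndBlock

namespace OddCycleConfig

theorem exists_adj_of_closedIn (h : OddCycleConfig G H c s) (hb : b ∈ H) (hne : T.Nonempty)
    (hT : T ⊆ H \ {b}) (hc : ClosedIn G T (H \ {b})) : ∃ i, ∃ a ∈ T, G.Adj a (c i) := by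
  by_contra! hno
  refine (h.kConnected.mem_or_mem hne (Z := {b}) (by simp) (fun u hu v hv ha => ?_) (c 0)).elim
    (fun h₀ => h.notMem 0 (hT h₀).1) fun h₀ => h.notMem 0 (h₀ ▸ hb)
  by_cases hvH : v ∈ H
  · exact hc u hu v ⟨hvH, hv⟩ ha
  · obtain ⟨j, rfl⟩ := h.exists_eq hvH
    exact absurd ha (hno j u hu)

theorem exists_antipodal (h : OddCycleConfig G H c s) (hD : ∃ i, ∃ a ∈ D, G.Adj a (c i))
    (hD' : ∃ i, ∃ w ∈ H \ D, G.Adj w (c i)) :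
    ∃ i, (∃ a ∈ D, G.Adj a (c i)) ∧ ∃ w ∈ H \ D, G.Adj w (c (i + s)) := by
  by_contra! hcon
  have hstep : ∀ i, (∃ a ∈ D, G.Adj a (c i)) → ∃ a ∈ D, G.Adj a (c (i + s)) := fun i hi => by
    obtain ⟨y, hy, ha⟩ := h.exists_adj_ne (i + s) (c 0)
    exact ⟨y, by_contra fun hyD => hcon i hi y ⟨hy.1, hyD⟩ ha.symm, ha.symm⟩
  have hpred : ∀ i, (∃ a ∈ D, G.Adj a (c (i + 1))) → ∃ a ∈ D, G.Adj a (c i) := fun i hi => by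
    have htwice := hstep _ (hstep _ hi)
    rwa [← h.periodic i, show i + (2 * s + 1 : ℕ) = i + 1 + s + s by push_cast; ring]
  have hall (j : ℤ) : ∃ a ∈ D, G.Adj a (c j) := by
    obtain ⟨i, hi⟩ := hD
    obtain ⟨d, -, hd⟩ := h.exists_eq_add j i
    rw [hd] at hi
    clear hd
    induction d with
    | zero => simpa using hi
    | succ d ih => exact ih (hpred _ (by rwa [add_assoc, ← Nat.cast_succ]))
  obtain ⟨j, w, hw, ha⟩ := hD'
  exact hcon (j - s) (hall _) w hw (by simpa using ha)

theorem exists_isEndBlock (h : OddCycleConfig G H c s) : ∃ b D, IsEndBlock G H b D ∧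
    ∃ i, (∃ a ∈ D, G.Adj a (c i)) ∧ ∃ w ∈ H \ D, G.Adj w (c (i + s)) := by
  have := h.kConnected.finite
  obtain ⟨u, hu, hau⟩ := h.exists_adj_ne 0 (c 0)
  obtain ⟨x, hx, -⟩ := h.exists_adj_ne 0 u
  obtain ⟨b, D, hE, hbu⟩ := h.connectedOn.exists_isEndBlock hu.1 ⟨x, hx⟩
  refine ⟨b, D, hE, h.exists_antipodal
    (h.exists_adj_of_closedIn hE.mem hE.nonempty hE.subset hE.closedIn) ?_⟩
  rcases ((H \ {b}) \ D).eq_empty_or_nonempty with hempty | hne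
  · obtain rfl := hbu (hE.subset.antisymm (Set.sdiff_eq_empty.1 hempty))
    exact ⟨0, b, ⟨hE.mem, hE.notMem⟩, hau.symm⟩
  · obtain ⟨i, w, hw, ha⟩ := h.exists_adj_of_closedIn hE.mem hne Set.sdiff_subset hE.closedIn.sdiff
    exact ⟨i, w, ⟨hw.1.1, hw.2⟩, ha⟩

end OddCycleConfig

end

section

variable {V : Type*} {G : SimpleGraph V} {A B Q S T X Y : Set V} {e t v w : V}

theorem ConnectedOn.exists_adj_of_ne (h : ConnectedOn G S) (hv : v ∈ S) (hw : w ∈ S)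
    (hne : w ≠ v) : ∃ x ∈ S, G.Adj v x := by
  obtain ⟨x, hx, _, rfl, ha⟩ := h.exists_adj (R := {v}ᶜ) (K := {v}) ⟨w, hw, hne⟩ (by simpa)
    (fun _ _ x hx _ => not_not.1 hx.2) (Set.singleton_nonempty v)
  exact ⟨x, hx.1, ha.symm⟩

/-- `T` is a part of `Q` without vertices of `B` or `Y` that a vertex `t` outside `T` separates
from the rest of `Q`. The empty set qualifies. -/
structure IsUnmarkedPart (G : SimpleGraph V) (Q B Y : Set V) (t : V) (T : Set V) : Prop where
  mem : t ∈ Q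
  subset : T ⊆ Q \ {t}
  closedIn : ClosedIn G T (Q \ {t})
  unmarked : ∀ x ∈ T, x ∉ B ∧ x ∉ Y

/-- A maximal unmarked part `T` of `Q`, chosen such that the terminals of `A` that survive outside
`T` do not interfere: there are none unless `T` is empty, and then `e` is the only one. -/
structure IsMaximalUnmarkedPart (G : SimpleGraph V) (Q A B Y : Set V) (e : V) (T : Set V) : Prop
    extends IsUnmarkedPart G Q B Y e T where
  eq_of_subset : ∀ t T', IsUnmarkedPart G Q B Y t T' → T ⊆ T' → T = T'
  eq_of_mem : ∀ v ∈ Q \ T, v ∈ A → v = e ∧ T = ∅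

namespace IsMaximalUnmarkedPart

theorem connectedOn_sdiff (h : IsMaximalUnmarkedPart G Q A B Y e T) (hQ : ConnectedOn G Q) :
    ConnectedOn G (Q \ T) :=
  hQ.sdiff .singleton (Set.singleton_subset_iff.2 h.mem) (Set.singleton_nonempty e) h.subset
    h.closedIn

theorem anchored (h : IsMaximalUnmarkedPart G Q A B Y e T) (ht : t ∈ Q \ T)
    (hQ : Anchored G Q A B {t}) : Anchored G (Q \ T) B Y {t} := by
  intro X hX hne hc
  by_contra! hno
  have hXQ : X ⊆ Q \ {t} := fun x hx => ⟨(hX hx).1.1, (hX hx).2⟩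
  by_cases hcase : T.Nonempty ∧ e ∉ X
  · obtain ⟨x, hx, hxA | hxB⟩ := hQ X hXQ hne fun u hu v hv ha => hc u hu v ⟨⟨hv.1, fun hvT =>
      (hX hu).1.2 (h.closedIn v hvT u ⟨(hX hu).1.1, fun hue => hcase.2 (hue ▸ hu)⟩ ha.symm)⟩,
      hv.2⟩ ha
    · exact hcase.1.ne_empty (h.eq_of_mem x (hX hx).1 hxA).2
    · exact (hno x hx).1 hxB
  · have hpart : IsUnmarkedPart G Q B Y t (T ∪ X) := by
      refine ⟨ht.1, Set.union_subset (fun x hx => ⟨(h.subset hx).1, fun hxt =>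
        ht.2 (Set.mem_singleton_iff.1 hxt ▸ hx)⟩) hXQ, ?_,
        fun x hx => hx.elim (h.unmarked x) (hno x)⟩
      rintro u (hu | hu) v hv ha
      · by_cases hve : v = e
        · exact .inr (by_contra fun hvX => hcase ⟨⟨u, hu⟩, hve ▸ hvX⟩)
        · exact .inl (h.closedIn u hu v ⟨hv.1, hve⟩ ha)
      · by_cases hvT : v ∈ T
        exacts [.inl hvT, .inr (hc u hu v ⟨⟨hv.1, hvT⟩, hv.2⟩ ha)]
    obtain ⟨x, hx⟩ := hne
    exact (hX hx).1.2 ((h.eq_of_subset t _ hpart Set.subset_union_left).superset (.inr hx))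

end IsMaximalUnmarkedPart

variable [Finite V]

theorem IsLinkable.exists_isMaximalUnmarkedPart (hQ : IsLinkable G Q A B w)
    (hA : (Q ∩ A).Subsingleton) (Y : Set V) : ∃ e T, IsMaximalUnmarkedPart G Q A B Y e T := by
  obtain ⟨a, ha⟩ := hQ.nonempty_left
  have hempty : IsUnmarkedPart G Q B Y a ∅ :=
    ⟨ha.1, Set.empty_subset _, fun _ hu => hu.elim, fun _ hx => hx.elim⟩
  obtain ⟨T, ⟨t, hT⟩, hmax⟩ :=
    (Set.toFinite {T | ∃ t, IsUnmarkedPart G Q B Y t T}).exists_maximal ⟨∅, a, hempty⟩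
  have heq : ∀ t T', IsUnmarkedPart G Q B Y t T' → T ⊆ T' → T = T' :=
    fun t T' hT' hle => hle.antisymm (hmax ⟨t, hT'⟩ hle)
  rcases T.eq_empty_or_nonempty with rfl | hne
  · exact ⟨a, ∅, hempty, heq, fun v hv hvA => ⟨hA ⟨hv.1, hvA⟩ ha, rfl⟩⟩
  · refine ⟨t, T, hT, heq, fun v hv hvA => ?_⟩
    obtain ⟨x, hx, hxA | hxB⟩ := hQ.anchored t hT.mem T hT.subset hne hT.closedIn
    · exact absurd (hA ⟨hv.1, hvA⟩ ⟨(hT.subset hx).1, hxA⟩ ▸ hx) hv.2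
    · exact absurd hxB (hT.unmarked x hx).1

namespace IsMaximalUnmarkedPart

theorem three_le_markedDegree (h : IsMaximalUnmarkedPart G Q A B Y e T) (hv : v ∈ Q \ T)
    (hve : v ≠ e) (h₃ : 3 ≤ markedDegree G Q A B v) : 3 ≤ markedDegree G (Q \ T) B Y v := by
  have hA : mark A v = 0 := mark_of_notMem fun hvA => hve (h.eq_of_mem v hv hvA).1
  have hT : G.neighborSet v ∩ T = ∅ := Set.eq_empty_of_forall_notMem fun x hx =>
    hv.2 (h.closedIn x hx.2 v ⟨hv.1, hve⟩ hx.1.symm)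
  have hsplit := ncard_neighborSet_inter_le_add_sdiff (G := G) Q T v
  rw [hT, Set.ncard_empty] at hsplit
  unfold markedDegree at *
  omega

theorem two_le_markedDegree (h : IsMaximalUnmarkedPart G Q A B Y e T)
    (hc : ConnectedOn G (Q \ T)) (hw : w ∈ Q \ T) (hwe : w ≠ e) :
    2 ≤ markedDegree G (Q \ T) B Y e := by
  have heT : e ∉ T := fun he => (h.subset he).2 rfl
  obtain ⟨t, ht, ha⟩ := hc.exists_adj_of_ne ⟨h.mem, heT⟩ hw hwe
  by_contra! hlt
  have hpos := (Set.ncard_pos (s := G.neighborSet e ∩ (Q \ T))).2 ⟨t, ha, ht⟩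
  unfold markedDegree at hlt
  have hsub : (G.neighborSet e ∩ (Q \ T)).Subsingleton :=
    Set.ncard_le_one_iff_subsingleton.1 (by omega)
  have hmark {X : Set V} (hX : mark X e = 0) : e ∉ X := fun he => by simp [mark_of_mem he] at hX
  have hpart : IsUnmarkedPart G Q B Y t (insert e T) := by
    refine ⟨ht.1, Set.insert_subset ⟨h.mem, ha.ne⟩ fun x hx =>
      ⟨(h.subset hx).1, fun hxt => ht.2 (Set.mem_singleton_iff.1 hxt ▸ hx)⟩, ?_, ?_⟩
    · rintro u (rfl | hu) v hv hav
      · by_contra hvT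
        exact hv.2 (hsub ⟨hav, hv.1, fun hvT' => hvT (.inr hvT')⟩ ⟨ha, ht⟩)
      · by_cases hve : v = e
        exacts [.inl hve, .inr (h.closedIn u hu v ⟨hv.1, hve⟩ hav)]
    · rintro x (rfl | hx)
      exacts [⟨hmark (by omega), hmark (by omega)⟩, h.unmarked x hx]
  exact heT ((h.eq_of_subset t _ hpart (Set.subset_insert e T)).superset (Set.mem_insert e T))

end IsMaximalUnmarkedPart

theorem IsLinkable.exists_linksApart_of_subsingleton (hQ : IsLinkable G Q A B w) (hw : w ∉ Q)
    (hA : (Q ∩ A).Subsingleton) (hY : 2 ≤ (Y ∩ Q).ncard) :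
    ∃ d, (d = 1 ∨ d = 2) ∧ LinksApart G Q B Y d := by
  obtain ⟨e, T, hT⟩ := hQ.exists_isMaximalUnmarkedPart hA Y
  have hc := hT.connectedOn_sdiff hQ.connectedOn
  obtain ⟨y, ⟨hyY, hyQ⟩, hye⟩ := Set.exists_ne_of_one_lt_ncard hY e
  have hyT : y ∈ Q \ T := ⟨hyQ, fun hyT => (hT.unmarked y hyT).2 hyY⟩
  obtain ⟨x, hxQ, hxB⟩ := hQ.nonempty_right
  have hlink : IsLinkable G (Q \ T) B Y e :=
    { connectedOn := hc
      nonempty_left := ⟨x, ⟨hxQ, fun hxT => (hT.unmarked x hxT).1 hxB⟩, hxB⟩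
      nonempty_right := ⟨y, hyT, hyY⟩
      three_le := fun v hv hve => hT.three_le_markedDegree hv hve
        (hQ.three_le v hv.1 fun hvw => hw (hvw ▸ hv.1))
      two_le := fun _ => hT.two_le_markedDegree hc hyT hye
      exists_ne := ⟨y, hyT, hye⟩
      anchored := fun t ht => hT.anchored ht (hQ.anchored t ht.1) }
  obtain ⟨d, hd, hl⟩ := hlink.exists_linksApart
  exact ⟨d, hd, hl.lift (r := 0) fun n ⟨u, hu, v, hv, p⟩ => ⟨u, hu, v, hv, p.mono Set.sdiff_subset⟩⟩

end

section

variable {V : Type*} {G : SimpleGraph V} {A B D H K R X : Set V} {b p q u v : V} {c : ℤ → V}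
  {s : ℕ} {i : ℤ}

theorem ncard_inter_le_markedDegree_of_pair [Finite V]
    (hX : ∀ x ∈ X, G.Adj v x → x ∈ K ∨ x = p ∨ x = q) :
    (G.neighborSet v ∩ X).ncard ≤
      markedDegree G K (G.neighborSet p) (G.neighborSet q) v := by
  have hmark (r : V) : (G.neighborSet v ∩ {r}).ncard ≤ mark (G.neighborSet r) v :=
    ncard_le_mark (Set.subsingleton_singleton.anti Set.inter_subset_right)
      fun ⟨_, hx, hxr⟩ => (hxr ▸ hx : G.Adj v r).symm
  have hsub : G.neighborSet v ∩ X ⊆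
      G.neighborSet v ∩ K ∪ G.neighborSet v ∩ {p} ∪ G.neighborSet v ∩ {q} := by
    rintro x ⟨hx, hxX⟩
    rcases hX x hxX hx with h | h | h
    exacts [.inl (.inl ⟨hx, h⟩), .inl (.inr ⟨hx, h⟩), .inr ⟨hx, h⟩]
  calc (G.neighborSet v ∩ X).ncard
      ≤ (G.neighborSet v ∩ K ∪ G.neighborSet v ∩ {p} ∪ G.neighborSet v ∩ {q}).ncard :=
        Set.ncard_le_ncard hsub
    _ ≤ (G.neighborSet v ∩ K).ncard + (G.neighborSet v ∩ {p}).ncard +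
        (G.neighborSet v ∩ {q}).ncard :=
        (Set.ncard_union_le _ _).trans (Nat.add_le_add_right (Set.ncard_union_le _ _) _)
    _ ≤ markedDegree G K (G.neighborSet p) (G.neighborSet q) v :=
        Nat.add_le_add (Nat.add_le_add_left (hmark p) _) (hmark q)

theorem ClosedIn.ncard_inter_le_markedDegree [Finite V] (hK : ClosedIn G K (X \ {p, q}))
    (hv : v ∈ K) : (G.neighborSet v ∩ X).ncard ≤
      markedDegree G K (G.neighborSet p) (G.neighborSet q) v :=
  ncard_inter_le_markedDegree_of_pair fun x hx ha => by
    by_cases hpq : x = p ∨ x = q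
    exacts [.inr hpq, .inl (hK v hv x ⟨hx, hpq⟩ ha)]

namespace OddCycleConfig

theorem three_le_ncard (h : OddCycleConfig G H c s) (hno : ¬ HasConsecCycles G 4)
    (hE : IsEndBlock G H b D) (hu : u ∈ D) : 3 ≤ (G.neighborSet u ∩ insert b D).ncard := by
  have := h.kConnected.finite
  have hcycle : ∀ x ∈ G.neighborSet u \ insert b D, ∃ j, c j = x := fun x hx =>
    h.exists_eq fun hxH => hx.2 (hE.mem_insert_of_adj hu hxH hx.1)
  have hone : (G.neighborSet u \ insert b D).ncard ≤ 1 := by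
    rw [Set.ncard_le_one_iff_subsingleton]
    intro x hx y hy
    obtain ⟨j, rfl⟩ := hcycle x hx
    obtain ⟨k, rfl⟩ := hcycle y hy
    exact h.eq_of_adj_of_adj hno (hE.subset hu).1 (hE.connectedOn_sdiff_singleton u hu) hx.1 hy.1
  have hsplit := Set.ncard_inter_add_ncard_sdiff_eq_ncard (G.neighborSet u) (insert b D)
  have hdeg := h.four_le_ncard u
  omega

theorem exists_adj_of_ncard_le_three (h : OddCycleConfig G H c s) (hE : IsEndBlock G H b D)
    (hu : u ∈ D) (hle : (G.neighborSet u ∩ insert b D).ncard ≤ 3) : ∃ j, G.Adj u (c j) := by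
  by_contra! hnone
  have hsub : G.neighborSet u ⊆ insert b D := fun x hx => hE.mem_insert_of_adj hu
    (by_contra fun hxH => by obtain ⟨j, rfl⟩ := h.exists_eq hxH; exact hnone j hx) hx
  rw [Set.inter_eq_left.2 hsub] at hle
  exact absurd (h.four_le_ncard u) (by omega)

theorem two_le_ncard_attachment (h : OddCycleConfig G H c s) (hno : ¬ HasConsecCycles G 4)
    (hE : IsEndBlock G H b D) : 2 ≤ (G.neighborSet b ∩ insert b D).ncard := by
  have := h.kConnected.finite
  obtain ⟨x, hx, hbx⟩ := hE.exists_adj h.connectedOn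
  obtain ⟨y, hy, hyb⟩ := Set.exists_ne_of_one_lt_ncard
    (lt_of_lt_of_le (by omega) (h.three_le_ncard hno hE hx) : 1 < _) b
  obtain ⟨z, hz, hbz⟩ := (hE.connectedOn_insert_sdiff_singleton (.inr hx)).exists_adj_of_ne
    ⟨.inl rfl, hbx.ne⟩ ⟨hy.2, hy.1.ne'⟩ hyb
  exact (Set.one_lt_ncard (s := G.neighborSet b ∩ insert b D)).2 ⟨x, ⟨hbx, .inr hx⟩,
    z, ⟨hbz, hz.1⟩, fun hxz => hz.2 hxz.symm⟩

theorem isLinkable (h : OddCycleConfig G H c s) (hno : ¬ HasConsecCycles G 4)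
    (hE : IsEndBlock G H b D) (hR : (insert b D ∩ R).Nonempty) (hK : K ⊆ insert b D \ R)
    (hKc : ClosedIn G K (insert b D \ R)) (hconn : ConnectedOn G K)
    (hAB : ∀ r ∈ R, ∀ x ∈ K, G.Adj r x → x ∈ A ∨ x ∈ B)
    (hdeg : ∀ v ∈ K, (G.neighborSet v ∩ insert b D).ncard ≤ markedDegree G K A B v)
    (hA : (K ∩ A).Nonempty) (hB : (K ∩ B).Nonempty) (hne : ∃ x ∈ K, x ≠ b) :
    IsLinkable G K A B b where
  connectedOn := hconn
  nonempty_left := hA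
  nonempty_right := hB
  three_le v hv hvb :=
    (h.three_le_ncard hno hE ((hK hv).1.resolve_left hvb)).trans (hdeg v hv)
  two_le hb := (h.two_le_ncard_attachment hno hE).trans (hdeg b hb)
  exists_ne := hne
  anchored t ht := by
    obtain ⟨r, hr, hrR⟩ := hR
    exact hKc.anchored_of_adj hK (hE.connectedOn_insert_sdiff_singleton (hK ht).1)
      ⟨r, ⟨hr, fun hrt => (hK ht).2 (Set.mem_singleton_iff.1 hrt ▸ hrR)⟩, hrR⟩ hAB

theorem isLinkable_of_adj (h : OddCycleConfig G H c s) (hno : ¬ HasConsecCycles G 4)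
    (hE : IsEndBlock G H b D) (hp : p ∈ D) (hq : q ∈ D) (hpq : G.Adj p q)
    (hK : K ⊆ insert b D \ {p, q}) (hKc : ClosedIn G K (insert b D \ {p, q}))
    (hconn : ConnectedOn G K) (hne : K.Nonempty) :
    IsLinkable G K (G.neighborSet p) (G.neighborSet q) b := by
  have := h.kConnected.finite
  have hattached {r r' : V} (hr : r ∈ D) (hr' : r' ∈ D) (hrr : r ≠ r')
      (heq : insert b D \ {p, q} = (insert b D \ {r'}) \ {r}) :
      (K ∩ G.neighborSet r).Nonempty := by
    obtain ⟨_, ⟨-, rfl⟩, x, hx, ha⟩ := (hE.connectedOn_insert_sdiff_singleton (.inr hr')).exists_adj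
      (R := {r}) ⟨r, ⟨.inr hr, hrr⟩, rfl⟩ (heq ▸ hK) (heq ▸ hKc) hne
    exact ⟨x, hx, ha⟩
  have hA := hattached hp hq hpq.ne (by rw [Set.sdiff_sdiff, Set.union_comm]; rfl)
  have hB := hattached hq hp hpq.ne' (by rw [Set.sdiff_sdiff]; rfl)
  refine h.isLinkable hno hE ⟨p, .inr hp, .inl rfl⟩ hK hKc hconn ?_
    (fun v hv => hKc.ncard_inter_le_markedDegree hv) hA hB ?_
  · rintro r (rfl | rfl) x - ha
    exacts [.inl ha, .inr ha]
  · by_contra! hall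
    obtain ⟨x, hx, hpx⟩ := hA
    obtain ⟨y, hy, hqy⟩ := hB
    exact not_adj_of_cliqueFree h.cliqueFree hpq (hall x hx ▸ hpx) (hall y hy ▸ hqy)

theorem isLinkable_endBlock (h : OddCycleConfig G H c s) (hno : ¬ HasConsecCycles G 4)
    (hE : IsEndBlock G H b D) (hi : ∃ a ∈ D, G.Adj a (c i)) :
    IsLinkable G D (G.neighborSet (c i)) (G.neighborSet b) b := by
  have := h.kConnected.finite
  obtain ⟨a, ha, hai⟩ := hi
  refine h.isLinkable hno hE (R := {b}) ⟨b, .inl rfl, rfl⟩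
    (fun x hx => ⟨.inr hx, (hE.subset hx).2⟩)
    (fun _ _ v hv _ => hv.1.resolve_left hv.2) hE.connectedOn ?_
    (fun _ _ => ncard_inter_le_markedDegree_of_pair fun _ hx _ =>
      hx.elim (fun hxb => .inr (.inr hxb)) .inl) ⟨a, ha, hai.symm⟩
    (hE.exists_adj h.connectedOn) ⟨a, ha, fun hab => hE.notMem (hab ▸ ha)⟩
  rintro r rfl x - hrx
  exact .inr hrx

theorem exists_adj_ncard_le_three (h : OddCycleConfig G H c s) (hno : ¬ HasConsecCycles G 4)
    (hE : IsEndBlock G H b D) (hi : ∃ a ∈ D, G.Adj a (c i))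
    (hi' : ∃ w ∈ H \ D, G.Adj w (c (i + s))) : ∃ p ∈ D, ∃ q ∈ D, G.Adj p q ∧
      (G.neighborSet p ∩ insert b D).ncard ≤ 3 ∧ (G.neighborSet q ∩ insert b D).ncard ≤ 3 := by
  have := h.kConnected.finite
  have hdeg : ∀ v ∈ D, (G.neighborSet v ∩ insert b D).ncard ≤
      markedDegree G D (G.neighborSet (c i)) (G.neighborSet b) v := fun _ _ =>
    ncard_inter_le_markedDegree_of_pair fun _ hx _ => hx.elim (fun hxb => .inr (.inr hxb)) .inl
  rcases (h.isLinkable_endBlock hno hE hi).hasCloseLinks with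
    hl | ⟨-, hb | ⟨p, hp, q, hq, hpq, hp₃, hq₃, -⟩⟩
  · obtain ⟨w, hw, hwi⟩ := hi'
    obtain ⟨m, r⟩ := hE.connectedOn_sdiff.exists_pathIn ⟨hE.mem, hE.notMem⟩ hw
    refine absurd (h.hasConsecCycles_of_linksApart (i := i) ?_) hno
    exact hl.lift (r := m + 1) fun n ⟨u, hu, v, hv, p⟩ => ⟨u, hu, w, hwi.symm,
      p.append r hv.symm Set.disjoint_sdiff_right (hE.subset.trans Set.sdiff_subset)
        Set.sdiff_subset⟩
  · exact absurd hb hE.notMem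
  · exact ⟨p, hp, q, hq, hpq, (hdeg p hp).trans hp₃, (hdeg q hq).trans hq₃⟩

end OddCycleConfig

end

/-! ### Low edges of an end block -/

section

variable {V : Type*} {G : SimpleGraph V} {A B D H S Y : Set V} {b p q : V} {c : ℤ → V}
  {s d e l m : ℕ} {i j : ℤ}

theorem Link.of_sdiff_pair (hL : Link G (S \ {p, q}) (G.neighborSet p ∪ G.neighborSet q) B l)
    (hp : p ∈ S ∩ A) (hq : q ∈ S ∩ A) (hpq : G.Adj p q) :
    Link G S A B (l + 1) ∧ Link G S A B (l + 2) := by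
  obtain ⟨u, hu, v, hv, r⟩ := hL
  have hsub : S \ {p, q} ⊆ (S \ {p}) \ {q} := by
    rw [Set.sdiff_sdiff]
    rfl
  have hsub' : S \ {p, q} ⊆ (S \ {q}) \ {p} := Set.pair_comm p q ▸ by
    rw [Set.sdiff_sdiff]
    rfl
  rcases hu with hu | hu
  · exact ⟨⟨p, hp.2, v, hv, .cons hp.1 hu (r.mono (hsub.trans Set.sdiff_subset))⟩,
      q, hq.2, v, hv, .cons hq.1 hpq.symm (.cons ⟨hp.1, hpq.ne⟩ hu (r.mono hsub'))⟩
  · exact ⟨⟨q, hq.2, v, hv, .cons hq.1 hu (r.mono (hsub'.trans Set.sdiff_subset))⟩,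
      p, hp.2, v, hv, .cons hp.1 hpq (.cons ⟨hq.1, hpq.ne'⟩ hu (r.mono hsub))⟩

theorem LinksApart.exists_link_of_sdiff_pair
    (hL : LinksApart G (S \ {p, q}) (G.neighborSet p ∪ G.neighborSet q) B d)
    (hd : d = 1 ∨ d = 2) (hp : p ∈ S ∩ A) (hq : q ∈ S ∩ A) (hpq : G.Adj p q) :
    ∃ m, Link G S A B m ∧ Link G S A B (m + 1) ∧ Link G S A B (m + 2) := by
  obtain ⟨l, hl, hl'⟩ := hL
  obtain ⟨h₁, h₂⟩ := hl.of_sdiff_pair hp hq hpq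
  obtain ⟨h₃, h₄⟩ := hl'.of_sdiff_pair hp hq hpq
  rcases hd with rfl | rfl
  exacts [⟨l + 1, h₁, h₂, h₄⟩, ⟨l + 1, h₁, h₂, h₃⟩]

namespace OddCycleConfig

theorem hasCycleLength_of_link_union (h : OddCycleConfig G H c s)
    (hL : Link G H (G.neighborSet (c i) ∪ G.neighborSet (c (i + d)))
      (G.neighborSet (c (i + d + e))) l)
    (he : 1 ≤ e) (hde : d + 2 * e = 2 * s + 1) :
    HasCycleLength G (l + e + 2) ∧ HasCycleLength G (l + e + d + 2) := by
  obtain ⟨u, hu | hu, v, hv, p⟩ := hL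
  · have hv' : v ∈ G.neighborSet (c (i + (d + e : ℕ))) := by rwa [Nat.cast_add, ← add_assoc]
    obtain ⟨hlong, hshort⟩ := h.hasCycleLength ⟨u, hu, v, hv', p⟩ (n := e) (by omega) he (by omega)
    exact ⟨hshort, by rwa [add_assoc l, add_comm e]⟩
  · obtain ⟨hshort, hlong⟩ := h.hasCycleLength ⟨u, hu, v, hv, p⟩ (n := e + d) he (by omega)
      (by omega)
    exact ⟨hshort, by rwa [add_assoc l]⟩

theorem hasConsecCycles_of_links (h : OddCycleConfig G H c s)
    (hL : ∃ m, Link G H A B m ∧ Link G H A B (m + 1) ∧ Link G H A B (m + 2))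
    (hA : A = G.neighborSet (c i) ∪ G.neighborSet (c (i + d)))
    (hB : B = G.neighborSet (c (i + d + e))) (hd : d = 1 ∨ d = 3)
    (hde : d + 2 * e = 2 * s + 1) : HasConsecCycles G 4 := by
  have hs := h.two_le
  subst hA hB
  obtain ⟨m, hm₀, hm₁, hm₂⟩ := hL
  obtain ⟨h₀, h₀'⟩ := h.hasCycleLength_of_link_union hm₀ (by omega) hde
  obtain ⟨h₁, -⟩ := h.hasCycleLength_of_link_union hm₁ (by omega) hde
  obtain ⟨h₂, h₂'⟩ := h.hasCycleLength_of_link_union hm₂ (by omega) hde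
  have h₃ : HasCycleLength G (m + e + 2 + 3) := by
    rcases hd with rfl | rfl
    · convert h₂' using 1
      omega
    · exact h₀'
  refine ⟨m + e + 2, fun k hk => ?_⟩
  obtain hk | hk | hk | hk : m + e + 2 + k = m + e + 2 ∨ m + e + 2 + k = m + 1 + e + 2 ∨
    m + e + 2 + k = m + 2 + e + 2 ∨ m + e + 2 + k = m + e + 2 + 3 := by omega
  all_goals rw [hk]; assumption

theorem ncard_inter_pair_le_mark (h : OddCycleConfig G H c s) (hpq : G.Adj p q) (v : V) :
    (G.neighborSet v ∩ {p, q}).ncard ≤ mark (G.neighborSet p ∪ G.neighborSet q) v := by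
  refine ncard_le_mark ?_ ?_
  · rintro x ⟨hx, rfl | rfl⟩ y ⟨hy, rfl | rfl⟩
    exacts [rfl, absurd hpq (not_adj_of_cliqueFree h.cliqueFree hx hy),
      absurd hpq (not_adj_of_cliqueFree h.cliqueFree hy hx), rfl]
  · rintro ⟨x, hx, rfl | rfl⟩
    exacts [.inl hx.symm, .inr hx.symm]

theorem isLinkable_sdiff_pair (h : OddCycleConfig G H c s) (hno : ¬ HasConsecCycles G 4)
    (hE : IsEndBlock G H b D) (hp : p ∈ D) (hq : q ∈ D) (hpq : G.Adj p q)
    (hc : ConnectedOn G (H \ {p, q})) (hY : (insert b D \ {p, q} ∩ Y).Nonempty) :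
    IsLinkable G (insert b D \ {p, q}) (G.neighborSet p ∪ G.neighborSet q) Y b := by
  have := h.kConnected.finite
  have hdeg (v : V) : (G.neighborSet v ∩ insert b D).ncard ≤
      markedDegree G (insert b D \ {p, q}) (G.neighborSet p ∪ G.neighborSet q) Y v := by
    have hsplit := ncard_neighborSet_inter_le_add_sdiff (G := G) (insert b D) {p, q} v
    have hv := h.ncard_inter_pair_le_mark hpq v
    unfold markedDegree
    omega
  obtain ⟨x, ⟨⟨hpx, hx⟩, hxq⟩, hxb⟩ :
      ∃ x ∈ (G.neighborSet p ∩ insert b D) \ {q}, x ≠ b := by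
    have h₃ := h.three_le_ncard hno hE hp
    have hle := Set.le_ncard_sdiff {q} (G.neighborSet p ∩ insert b D)
    rw [Set.ncard_singleton] at hle
    exact Set.exists_ne_of_one_lt_ncard (by omega) b
  have hxK : x ∈ insert b D \ {p, q} := ⟨hx, fun hx' => hx'.elim (fun hxp => hpx.ne' hxp) hxq⟩
  refine h.isLinkable hno hE ⟨p, .inr hp, .inl rfl⟩ subset_rfl (fun _ _ v hv _ => hv)
    (hE.connectedOn_insert_sdiff (Set.pair_subset hp hq) hc) ?_ (fun v _ => hdeg v)
    ⟨x, hxK, .inl hpx⟩ hY ⟨x, hxK, hxb⟩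
  rintro r (rfl | rfl) y - hy
  exacts [.inl (.inl hy), .inl (.inr hy)]

theorem exists_linksApart_sdiff_pair (h : OddCycleConfig G H c s) (hno : ¬ HasConsecCycles G 4)
    (hE : IsEndBlock G H b D) (hp : p ∈ D) (hq : q ∈ D) (hpq : G.Adj p q)
    (hc : ConnectedOn G (H \ {p, q})) (hpj : ¬ G.Adj p (c j)) (hqj : ¬ G.Adj q (c j)) :
    ∃ d, (d = 1 ∨ d = 2) ∧ LinksApart G (H \ {p, q}) (G.neighborSet p ∪ G.neighborSet q)
      (G.neighborSet (c j)) d := by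
  have := h.kConnected.finite
  have hsub : insert b D \ {p, q} ⊆ H \ {p, q} := Set.sdiff_subset_sdiff_left hE.insert_subset
  have hpqD : ({p, q} : Set V) ⊆ D := Set.pair_subset hp hq
  by_cases hex : ∃ y ∈ insert b D, G.Adj y (c j)
  · obtain ⟨y, hy, hyj⟩ := hex
    have hypq : y ∉ ({p, q} : Set V) := by
      rintro (rfl | rfl)
      exacts [hpj hyj, hqj hyj]
    obtain ⟨d, hd, hL⟩ := (h.isLinkable_sdiff_pair hno hE hp hq hpq hc
      ⟨y, ⟨hy, hypq⟩, hyj.symm⟩).exists_linksApart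
    exact ⟨d, hd, hL.lift (r := 0) fun n ⟨u, hu, v, hv, r⟩ => ⟨u, hu, v, hv, r.mono hsub⟩⟩
  · push Not at hex
    obtain ⟨w, hw, hjw⟩ := h.exists_adj_ne j b
    obtain ⟨m, r⟩ := hE.connectedOn_sdiff.exists_pathIn ⟨hE.mem, hE.notMem⟩
      ⟨hw.1, fun hwD => hex w (.inr hwD) hjw.symm⟩
    obtain ⟨d, hd, hL⟩ := (h.isLinkable_sdiff_pair hno hE hp hq hpq hc (Y := {b})
      ⟨b, ⟨.inl rfl, fun hb => hE.notMem (hpqD hb)⟩, rfl⟩).exists_linksApart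
    cases r with
    | nil _ => exact absurd rfl hw.2
    | @cons _ _ z _ m _ hbz r =>
      refine ⟨d, hd, hL.lift (r := m + 1) ?_⟩
      rintro n ⟨u, hu, v, rfl, r'⟩
      refine ⟨u, hu, w, hjw, r'.append r hbz (Set.disjoint_left.2 ?_) hsub
        fun x hx => ⟨hx.1.1, fun hx' => hx.1.2 (hpqD hx')⟩⟩
      rintro x ⟨rfl | hx, -⟩ hx'
      exacts [hx'.2 rfl, hx'.1.2 hx]

theorem exists_adj_sdiff_pair (h : OddCycleConfig G H c s) (hpq : G.Adj p q) (j : ℤ) :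
    ∃ x ∈ H \ {p, q}, G.Adj (c j) x := by
  by_cases hpj : G.Adj p (c j)
  · obtain ⟨x, hx, hjx⟩ := h.exists_adj_ne j p
    refine ⟨x, ⟨hx.1, ?_⟩, hjx⟩
    rintro (rfl | rfl)
    exacts [hx.2 rfl, not_adj_of_cliqueFree h.cliqueFree hpj hpq hjx]
  · obtain ⟨x, hx, hjx⟩ := h.exists_adj_ne j q
    refine ⟨x, ⟨hx.1, ?_⟩, hjx⟩
    rintro (rfl | rfl)
    exacts [hpj hjx.symm, hx.2 rfl]

theorem le_three_of_connectedOn_sdiff_pair (h : OddCycleConfig G H c s) (hp : p ∈ H) (hq : q ∈ H)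
    (hpq : G.Adj p q) (hpi : G.Adj p (c i)) (hqi : G.Adj q (c (i + d))) (hd : Odd d)
    (hds : d < 2 * s + 1) (hc : ConnectedOn G (H \ {p, q})) : d ≤ 3 := by
  by_contra! hlt
  have := h.kConnected.finite
  let Y : Set V := (fun r : ℕ => c (i + r)) '' Set.Icc 1 3
  have hYcard : Y.ncard = 3 := by
    rw [Set.InjOn.ncard_image fun k hk l hl heq => h.eq_of_lt heq (by grind) (by grind)]
    simp [Set.ncard_eq_toFinset_card']
  have hYH : Y ⊆ Hᶜ := by
    rintro _ ⟨r, -, rfl⟩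
    exact h.notMem _
  have hYadj : ∀ y ∈ Y, ∃ x ∈ H \ {p, q}, G.Adj y x := by
    rintro _ ⟨r, -, rfl⟩
    exact h.exists_adj_sdiff_pair hpq _
  have hbip := h.bipartiteOn_exchange (Set.pair_subset hp hq) hc hYH hYadj
    (by rw [hYcard, Set.ncard_pair hpq.ne]; omega)
  have harc : PathIn G ({p, q} ∪ Hᶜ \ Y) (c (i + d)) (c (i + d + (2 * s + 1 - d : ℕ)))
      (2 * s + 1 - d) := by
    refine h.pathIn (by omega) fun k hk => .inr ⟨h.notMem _, ?_⟩
    rintro ⟨r, ⟨hr, hr'⟩, heq⟩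
    have := h.eq_of_lt (i := i + 1) (k := r - 1) (l := d + k - 1)
      (by convert heq using 2 <;> omega) (by omega) (by omega)
    omega
  have hclose := h.apply_add_add (show d + (2 * s + 1 - d) = 2 * s + 1 by omega) i
  refine harc.not_bipartiteOn_of_even ?_ (.inl (.inr rfl)) (.inl (.inl rfl)) hpq.symm hqi
    (hclose.symm ▸ hpi) hbip
  rw [Nat.even_sub' hds.le]
  simp [hd]

theorem not_connectedOn_sdiff_pair_of_odd (h : OddCycleConfig G H c s)
    (hno : ¬ HasConsecCycles G 4) (hE : IsEndBlock G H b D) (hp : p ∈ D) (hq : q ∈ D)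
    (hpq : G.Adj p q) (hpi : G.Adj p (c i)) (hqi : G.Adj q (c (i + d))) (hd : Odd d)
    (hds : d < 2 * s + 1) : ¬ ConnectedOn G (H \ {p, q}) := fun hc => by
  have hpH := (hE.subset hp).1
  have hqH := (hE.subset hq).1
  have hd₃ := h.le_three_of_connectedOn_sdiff_pair hpH hqH hpq hpi hqi hd hds hc
  have hs := h.two_le
  obtain ⟨k, rfl⟩ := hd
  obtain ⟨e, rfl⟩ : ∃ e, s = k + e := ⟨s - k, by omega⟩
  have hpe : ¬ G.Adj p (c (i + (2 * k + 1 : ℕ) + e)) := fun ha => by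
    have heq := h.eq_of_adj_of_adj hno hpH (hE.connectedOn_sdiff_singleton p hp) hpi ha
    have := h.eq_of_lt (i := i) (k := 0) (l := 2 * k + 1 + e)
      (by convert heq using 2 <;> omega) (by omega) (by omega)
    omega
  have hqe : ¬ G.Adj q (c (i + (2 * k + 1 : ℕ) + e)) := fun ha => by
    have heq := h.eq_of_adj_of_adj hno hqH (hE.connectedOn_sdiff_singleton q hq) hqi ha
    have := h.eq_of_lt (i := i + (2 * k + 1 : ℕ)) (k := 0) (l := e)
      (by convert heq using 2; omega) (by omega) (by omega)
    omega
  obtain ⟨δ, hδ, hL⟩ := h.exists_linksApart_sdiff_pair hno hE hp hq hpq hc hpe hqe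
  exact hno (h.hasConsecCycles_of_links (hL.exists_link_of_sdiff_pair hδ ⟨hpH, .inl hpi.symm⟩
    ⟨hqH, .inr hqi.symm⟩ hpq) rfl rfl (by omega) (by omega))

theorem not_connectedOn_sdiff_pair (h : OddCycleConfig G H c s) (hno : ¬ HasConsecCycles G 4)
    (hE : IsEndBlock G H b D) (hp : p ∈ D) (hq : q ∈ D) (hpq : G.Adj p q)
    (hp₃ : (G.neighborSet p ∩ insert b D).ncard ≤ 3)
    (hq₃ : (G.neighborSet q ∩ insert b D).ncard ≤ 3) : ¬ ConnectedOn G (H \ {p, q}) := by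
  obtain ⟨i, hpi⟩ := h.exists_adj_of_ncard_le_three hE hp hp₃
  obtain ⟨k, hqk⟩ := h.exists_adj_of_ncard_le_three hE hq hq₃
  obtain ⟨d, hds, hd⟩ := h.exists_eq_add i k
  rw [hd] at hqk
  rcases Nat.even_or_odd d with heven | hodd
  · have hd₀ : d ≠ 0 := by
      rintro rfl
      exact not_adj_of_cliqueFree h.cliqueFree hpq hpi (by simpa using hqk)
    have hclose := h.apply_add_add (show d + (2 * s + 1 - d) = 2 * s + 1 by omega) i
    rw [Set.pair_comm]
    refine h.not_connectedOn_sdiff_pair_of_odd hno hE hq hp hpq.symm hqk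
      (d := 2 * s + 1 - d) (hclose.symm ▸ hpi) ?_ (by omega)
    rw [Nat.odd_sub hds.le]
    simp [heven]
  · exact h.not_connectedOn_sdiff_pair_of_odd hno hE hp hq hpq hpi hqk hodd hds

end OddCycleConfig

end

section

variable {V : Type*} {G : SimpleGraph V} {A A' B B' D H Q R S S' T : Set V} {b p q v w x : V}
  {c : ℤ → V} {s d d' r : ℕ} {i : ℤ}

theorem exists_closedIn_of_not_connectedOn (hS : ¬ ConnectedOn G S) (v : V) :
    ∃ Q ⊆ S, Q.Nonempty ∧ ConnectedOn G Q ∧ ClosedIn G Q S ∧ v ∉ Q := by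
  by_contra! hall
  refine hS (.of_forall_mem (v := v) fun T hT ⟨x, hx⟩ hc => hc.componentIn_subset hx ?_)
  exact hall _ componentIn_subset ⟨x, mem_componentIn_self (hT hx)⟩ connectedOn_componentIn
    componentIn_closedIn

theorem Anchored.connectedOn_sdiff (hanch : Anchored G Q (G.neighborSet p) (G.neighborSet q) R)
    (hS : ConnectedOn G S) (hp : p ∈ S) (hq : q ∈ S) (hpq : G.Adj p q) (hQ : Q ⊆ S \ {p, q})
    (hc : ClosedIn G Q (S \ {p, q})) (hR : R ⊆ Q) : ConnectedOn G (S \ R) := by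
  have hpQ : p ∉ Q := fun hpQ => (hQ hpQ).2 (.inl rfl)
  have hqQ : q ∉ Q := fun hqQ => (hQ hqQ).2 (.inr rfl)
  have hrest : ConnectedOn G (S \ Q) := hS.sdiff (ConnectedOn.singleton.insert ⟨q, rfl, hpq⟩)
    (Set.pair_subset hp hq) ⟨p, .inl rfl⟩ hQ hc
  refine .of_forall_mem (v := p) fun T hT ⟨x, hx⟩ hcT => ?_
  by_cases hTQ : (T ∩ Q).Nonempty
  · obtain ⟨y, hy, hpy | hqy⟩ := hanch (T ∩ Q) (fun y hy => ⟨hy.2, (hT hy.1).2⟩) hTQ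
      fun u hu v hv ha => ⟨hcT u hu.1 v ⟨(hQ hv.1).1, hv.2⟩ ha, hv.1⟩
    · exact hcT y hy.1 p ⟨hp, fun hpR => hpQ (hR hpR)⟩ hpy.symm
    · exact hcT q (hcT y hy.1 q ⟨hq, fun hqR => hqQ (hR hqR)⟩ hqy.symm) p
        ⟨hp, fun hpR => hpQ (hR hpR)⟩ hpq.symm
  · have hTS : T = S \ Q := hrest.eq_of_closedIn
      (fun y hy => ⟨(hT hy).1, fun hyQ => hTQ ⟨y, hy, hyQ⟩⟩) ⟨x, hx⟩
      (hcT.mono (Set.sdiff_subset_sdiff_right hR))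
    exact hTS.superset ⟨hp, hpQ⟩

theorem LinksApart.two_of_forall (hL : LinksApart G S A B d) (hL' : LinksApart G S' A' B' d')
    (hd : d = 1 ∨ d = 2) (hd' : d' = 1 ∨ d' = 2) {X Y : Set V}
    (hlink : ∀ m n, Link G S A B m → Link G S' A' B' n → Link G T X Y (m + n + r)) :
    LinksApart G T X Y 2 := by
  obtain ⟨m, hm, hmd⟩ := hL
  obtain ⟨n, hn, hnd⟩ := hL'
  refine ⟨m + n + r, hlink m n hm hn, ?_⟩
  rcases hd with rfl | rfl
  · rcases hd' with rfl | rfl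
    · convert hlink _ _ hmd hnd using 1
      omega
    · convert hlink _ _ hm hnd using 1
      omega
  · convert hlink _ _ hmd hn using 1
    omega

/-- `Q` is a component, missing the attachment `b`, of what remains of `H` when the ends of the
edge `pq` of the end block `D` are deleted. -/
structure IsPendantPart (G : SimpleGraph V) (H : Set V) (b : V) (D : Set V) (p q : V)
    (Q : Set V) : Prop where
  left_mem : p ∈ D
  right_mem : q ∈ D
  adj : G.Adj p q
  subset_sdiff : Q ⊆ H \ {p, q}
  nonempty : Q.Nonempty
  connectedOn : ConnectedOn G Q
  closedIn : ClosedIn G Q (H \ {p, q})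
  notMem : b ∉ Q

namespace IsPendantPart

theorem subset (hQ : IsPendantPart G H b D p q Q) (hE : IsEndBlock G H b D) : Q ⊆ D :=
  hE.subset_of_closedIn (Set.pair_subset hQ.left_mem hQ.right_mem) hQ.subset_sdiff hQ.closedIn
    hQ.notMem

theorem subset_insert_sdiff (hQ : IsPendantPart G H b D p q Q) (hE : IsEndBlock G H b D) :
    Q ⊆ insert b D \ {p, q} :=
  fun _ hx => ⟨.inr (hQ.subset hE hx), (hQ.subset_sdiff hx).2⟩

theorem closedIn_insert_sdiff (hQ : IsPendantPart G H b D p q Q) (hE : IsEndBlock G H b D) :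
    ClosedIn G Q (insert b D \ {p, q}) :=
  hQ.closedIn.mono (Set.sdiff_subset_sdiff_left hE.insert_subset)

theorem isLinkable (hQ : IsPendantPart G H b D p q Q) (hE : IsEndBlock G H b D)
    (h : OddCycleConfig G H c s) (hno : ¬ HasConsecCycles G 4) :
    IsLinkable G Q (G.neighborSet p) (G.neighborSet q) b :=
  h.isLinkable_of_adj hno hE hQ.left_mem hQ.right_mem hQ.adj (hQ.subset_insert_sdiff hE)
    (hQ.closedIn_insert_sdiff hE) hQ.connectedOn hQ.nonempty

theorem linksApart_of_linksApart (hQ : IsPendantPart G H b D p q Q)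
    (hp : ConnectedOn G (H \ {p})) (hpH : p ∈ H) (hqH : q ∈ H) (hpA : p ∈ A)
    (hL : LinksApart G Q (G.neighborSet p) (G.neighborSet q) d)
    (hB : ((H \ Q) ∩ B).Nonempty) (hpB : p ∉ B) : LinksApart G H A B d := by
  obtain ⟨w, ⟨hwH, hwQ⟩, hwB⟩ := hB
  have hpQ : Q ⊆ H \ {p} := hQ.subset_sdiff.trans (Set.sdiff_subset_sdiff_right (by simp))
  have hpair : (H \ {p}) \ {q} = H \ {p, q} := by
    rw [Set.sdiff_sdiff]
    rfl
  have hconn : ConnectedOn G ((H \ {p}) \ Q) :=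
    hp.sdiff .singleton (Set.singleton_subset_iff.2 ⟨hqH, hQ.adj.ne'⟩) (Set.singleton_nonempty q)
      (hpair ▸ hQ.subset_sdiff) (hpair ▸ hQ.closedIn)
  obtain ⟨m, r⟩ := hconn.exists_pathIn
    ⟨⟨hqH, hQ.adj.ne'⟩, fun hqQ => (hQ.subset_sdiff hqQ).2 (.inr rfl)⟩
    (⟨⟨hwH, fun hwp => hpB (hwp ▸ hwB)⟩, hwQ⟩ : w ∈ (H \ {p}) \ Q)
  exact hL.lift (r := m + 2) fun n ⟨u, hu, v, hv, r'⟩ => ⟨p, hpA, w, hwB,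
    .cons hpH hu (r'.append r hv.symm Set.disjoint_sdiff_right hpQ Set.sdiff_subset)⟩

theorem linksApart_of_detour (hQ : IsPendantPart G H b D p q Q) (hE : IsEndBlock G H b D)
    (hS : S ⊆ insert b D \ {p, q}) (hSQ : Disjoint S Q) (hpA : p ∈ A)
    (hd : d = 1 ∨ d = 2) (hL : LinksApart G S (G.neighborSet p) (G.neighborSet q) d)
    (hd' : d' = 1 ∨ d' = 2) (hL' : LinksApart G Q (G.neighborSet q) B d') :
    LinksApart G H A B 2 := by
  have hpH := (hE.subset hQ.left_mem).1
  have hqH := (hE.subset hQ.right_mem).1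
  refine hL.two_of_forall hL' hd hd' (r := 3) ?_
  rintro m n ⟨u, hu, v, hv, t⟩ ⟨u', hu', w, hw, t'⟩
  have hq : PathIn G (insert q Q) q w (n + 1) := .cons (.inl rfl) hu' <|
    t'.mono fun x hx => ⟨.inr hx, fun hxq => (hQ.subset_sdiff hx).2 (.inr hxq)⟩
  refine ⟨p, hpA, w, hw, .cons hpH hu (t.append hq hv.symm ?_ ?_ ?_)⟩
  · exact Set.disjoint_insert_right.2 ⟨fun hqS => (hS hqS).2 (.inr rfl), hSQ⟩
  · exact fun x hx => ⟨hE.insert_subset (hS hx).1, fun hxp => (hS hx).2 (.inl hxp)⟩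
  · exact Set.insert_subset ⟨hqH, hQ.adj.ne'⟩
      fun x hx => ⟨(hQ.subset_sdiff hx).1, fun hxp => (hQ.subset_sdiff hx).2 (.inl hxp)⟩

theorem subsingleton_inter (hQ : IsPendantPart G H b D p q Q) (hE : IsEndBlock G H b D)
    [Finite V] (hp : (G.neighborSet p ∩ insert b D).ncard ≤ 3)
    (hx : x ∈ insert b D \ {p, q}) (hxQ : x ∉ Q) (hpx : G.Adj p x) :
    (Q ∩ G.neighborSet p).Subsingleton := by
  have hqx : q ∉ insert x (Q ∩ G.neighborSet p) := by
    rintro (rfl | hq)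
    exacts [hx.2 (.inr rfl), (hQ.subset_sdiff hq.1).2 (.inr rfl)]
  have hsub : insert q (insert x (Q ∩ G.neighborSet p)) ⊆ G.neighborSet p ∩ insert b D :=
    Set.insert_subset ⟨hQ.adj, .inr hQ.right_mem⟩ <| Set.insert_subset ⟨hpx, hx.1⟩
      fun y hy => ⟨hy.2, .inr (hQ.subset hE hy.1)⟩
  have hle := (Set.ncard_le_ncard hsub).trans hp
  rw [Set.ncard_insert_of_notMem hqx, Set.ncard_insert_of_notMem fun hx' => hxQ hx'.1] at hle
  exact Set.ncard_le_one_iff_subsingleton.1 (by omega)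

theorem linksApart_of_forall_mem (hQ : IsPendantPart G H b D p q Q) (hE : IsEndBlock G H b D)
    (h : OddCycleConfig G H c s) (hno : ¬ HasConsecCycles G 4)
    (hp : (G.neighborSet p ∩ insert b D).ncard ≤ 3) (hpA : p ∈ A)
    (hB : 2 ≤ (B ∩ Q).ncard) : LinksApart G H A B 2 := by
  have := h.kConnected.finite
  have hb : b ∈ insert b D \ {p, q} :=
    ⟨.inl rfl, fun hb => hE.notMem (Set.pair_subset hQ.left_mem hQ.right_mem hb)⟩
  set W := componentIn G (insert b D \ {p, q}) b
  have hbW : b ∈ W := mem_componentIn_self hb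
  have hWQ : Disjoint W Q := connectedOn_componentIn.disjoint_of_closedIn componentIn_subset
    (hQ.closedIn_insert_sdiff hE) ⟨hbW, hQ.notMem⟩
  have hW : IsLinkable G W (G.neighborSet p) (G.neighborSet q) b :=
    h.isLinkable_of_adj hno hE hQ.left_mem hQ.right_mem hQ.adj componentIn_subset
      componentIn_closedIn connectedOn_componentIn ⟨b, hbW⟩
  obtain ⟨x, hxW, hpx⟩ := hW.nonempty_left
  obtain ⟨d, hd, hL⟩ := hW.exists_linksApart
  obtain ⟨d', hd', hL'⟩ := (hQ.isLinkable hE h hno).exists_linksApart_of_subsingleton hQ.notMem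
    (hQ.subsingleton_inter hE hp (componentIn_subset hxW) (Set.disjoint_left.1 hWQ hxW) hpx) hB
  exact hQ.linksApart_of_detour hE componentIn_subset hWQ hpA hd hL hd' hL'

theorem not_linksApart_two (hQ : IsPendantPart G H b D p q Q) (hE : IsEndBlock G H b D)
    (h : OddCycleConfig G H c s) (hno : ¬ HasConsecCycles G 4)
    (hp : (G.neighborSet p ∩ insert b D).ncard ≤ 3) :
    ¬ LinksApart G Q (G.neighborSet p) (G.neighborSet q) 2 := fun hL => by
  have := h.kConnected.finite
  have hpH := (hE.subset hQ.left_mem).1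
  have hp' := hE.connectedOn_sdiff_singleton p hQ.left_mem
  obtain ⟨i, hpi⟩ := h.exists_adj_of_ncard_le_three hE hQ.left_mem hp
  refine hno (h.hasConsecCycles_of_linksApart (i := i) ?_)
  by_cases hB : ((H \ Q) ∩ G.neighborSet (c (i + s))).Nonempty
  · refine hQ.linksApart_of_linksApart hp' hpH (hE.subset hQ.right_mem).1 hpi.symm hL hB
      fun hpj => ?_
    have hs := h.two_le
    have heq := h.eq_of_adj_of_adj hno hpH hp' hpi hpj.symm
    have := h.eq_of_lt (i := i) (k := 0) (l := s) (by convert heq using 2; omega) (by omega)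
      (by omega)
    omega
  · refine hQ.linksApart_of_forall_mem hE h hno hp hpi.symm
      ((h.two_le_ncard_neighborSet_inter (i + s)).trans (Set.ncard_le_ncard fun x hx => ?_))
    exact ⟨hx.1, by_contra fun hxQ => hB ⟨x, ⟨hx.2, hxQ⟩, hx.1⟩⟩

theorem not_hasLowEdge (hQ : IsPendantPart G H b D p q Q) (hE : IsEndBlock G H b D)
    (h : OddCycleConfig G H c s) (hno : ¬ HasConsecCycles G 4) :
    ¬ HasLowEdge G Q (G.neighborSet p) (G.neighborSet q) := by
  rintro ⟨u, hu, v, hv, huv, hu₃, hv₃, hanch⟩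
  have := h.kConnected.finite
  have hdeg : ∀ x ∈ Q, (G.neighborSet x ∩ insert b D).ncard ≤
      markedDegree G Q (G.neighborSet p) (G.neighborSet q) x :=
    fun x hx => (hQ.closedIn_insert_sdiff hE).ncard_inter_le_markedDegree hx
  exact h.not_connectedOn_sdiff_pair hno hE (hQ.subset hE hu) (hQ.subset hE hv) huv
    ((hdeg u hu).trans hu₃) ((hdeg v hv).trans hv₃) <|
    hanch.connectedOn_sdiff h.connectedOn (hE.subset hQ.left_mem).1 (hE.subset hQ.right_mem).1
      hQ.adj hQ.subset_sdiff hQ.closedIn (Set.pair_subset hu hv)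

end IsPendantPart

theorem OddCycleConfig.hasConsecCycles (h : OddCycleConfig G H c s) : HasConsecCycles G 4 := by
  by_contra hno
  obtain ⟨b, D, hE, i, hi, hi'⟩ := h.exists_isEndBlock
  obtain ⟨p, hp, q, hq, hpq, hp₃, hq₃⟩ := h.exists_adj_ncard_le_three hno hE hi hi'
  obtain ⟨Q, hQsub, hne, hconn, hc, hb⟩ :=
    exists_closedIn_of_not_connectedOn (h.not_connectedOn_sdiff_pair hno hE hp hq hpq hp₃ hq₃) b
  have hQ : IsPendantPart G H b D p q Q := ⟨hp, hq, hpq, hQsub, hne, hconn, hc, hb⟩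
  have := h.kConnected.finite
  rcases (hQ.isLinkable hE h hno).hasCloseLinks with hL | ⟨-, hbQ | hlow⟩
  · exact hQ.not_linksApart_two hE h hno hp₃ hL
  · exact hb hbQ
  · exact hQ.not_hasLowEdge hE h hno hlow

end

/-- Every 3-connected nonbipartite graph of minimum degree at least 4 and order at
least 6 contains 4 cycles of consecutive lengths. -/
theorem consec_cycles_4 {V : Type*} [Fintype V] (G : SimpleGraph V)
    (h3 : KConnected G 3) (hnb : ¬ G.Colorable 2)
    (hdeg : ∀ v, 4 ≤ (G.neighborSet v).ncard) (hcard : 6 ≤ Nat.card V) :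
    HasConsecCycles G 4 := by
  by_cases hfree : G.CliqueFree 3
  · obtain ⟨H, c, s, h⟩ := exists_oddCycleConfig hfree h3 hdeg hnb
    exact h.hasConsecCycles
  · simp only [CliqueFree, not_forall, not_not] at hfree
    obtain ⟨T, hT, hT₃⟩ := hfree
    exact hasConsecCycles_of_triangle h3 hdeg hcard hT ((Set.ncard_coe_finset T).trans hT₃)
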